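/- arXiv:2206.11735 — 2 statements merged into one kernel-verified Lean document; each statement's English description precedes it below -/
import Mathlib

section
/- Assume (A(t), B(t)) is totally controllable on [0,1]. Then for all s, t₁, t₂ ∈ [0,1]: if s < t₁ < t₂, then 0 ≺ −Φ₁₁(t₁,s)⁻¹Φ₁₂(t₁,s) ≺ −Φ₁₁(t₂,s)⁻¹Φ₁₂(t₂,s); and if t₁ < t₂ < s, then −Φ₁₁(t₁,s)⁻¹Φ₁₂(t₁,s) ≺ −Φ₁₁(t₂,s)⁻¹Φ₁₂(t₂,s) ≺ 0. Here X ≺ Y means Y − X is positive definite. -/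
/-!
Fix `s` and write `P, R, S, T` for the blocks `Φ₁₁, Φ₁₂, Φ₂₁, Φ₂₂` of `Φ(·, s)`, and
`W = -P⁻¹ R`. Since `W(s) = 0`, both parts of the theorem follow from one claim: `W(b) - W(a)` is
positive definite for all `0 ≤ a < b ≤ 1` (`HamBlocks.posDef_W_sub`).

* `P` is invertible at all times (`HamBlocks.isUnit_P`): along a solution `(x, y)` of the Hamiltonian
  system, `(xᵀ y)' = -|Bᵀ y|² - xᵀ Q x ≤ 0`. If `y(s) = 0` and `x(t) = 0`, then `xᵀ y` vanishes
  between `s` and `t`, so `Bᵀ y = 0` and `x' = A x` there, and ODE uniqueness gives `x(s) = 0`.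
* The flow is symplectic (`HamBlocks.wronskian_const`). Hence `W` is symmetric and the Schur
  complement `T - S P⁻¹ R` is `P⁻ᵀ`, which gives `W' = P⁻¹ B Bᵀ P⁻ᵀ` (`HamBlocks.W_deriv`), so `W`
  is nondecreasing.
* If `vᵀ W v` is constant on `[a, b]`, then `z = P⁻ᵀ v` satisfies `Bᵀ z = 0`, hence `z' = -Aᵀ z`.
  Differentiating `zᵀ B = 0` repeatedly gives `zᵀ Γ_k = 0` for `k < n`, and total controllability
  forces `z = 0` somewhere (`adjoint_zero_of_controllable`), so `v = 0`.
-/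

open Matrix

/-- `IsSTM F Φ`: `Φ` is the state transition matrix of `F`, i.e. for each fixed `s`,
`t ↦ Φ t s` solves `X' = F t * X`, `X s = 1` (derivatives taken entrywise). -/
def IsSTM {ι : Type*} [Fintype ι] [DecidableEq ι] (F : ℝ → Matrix ι ι ℝ)
    (Φ : ℝ → ℝ → Matrix ι ι ℝ) : Prop :=
  (∀ s : ℝ, Φ s s = 1) ∧
  ∀ (s t : ℝ) (i j : ι), HasDerivAt (fun t' : ℝ => Φ t' s i j) ((F t * Φ t s) i j) t

/-- `IsCtrbMatSeq A B Γ`: `Γ 0 = B` and `Γ k = -A Γ (k-1) + Γ' (k-1)` for `1 ≤ k ≤ n`,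
i.e. the derivative of each entry of `Γ k` is the corresponding entry of `Γ (k+1) + A * Γ k`,
for `k < n`. -/
def IsCtrbMatSeq {n p : ℕ} (A : ℝ → Matrix (Fin n) (Fin n) ℝ)
    (B : ℝ → Matrix (Fin n) (Fin p) ℝ) (Γ : ℕ → ℝ → Matrix (Fin n) (Fin p) ℝ) : Prop :=
  Γ 0 = B ∧
  ∀ k < n, ∀ (t : ℝ) (i : Fin n) (j : Fin p),
    HasDerivAt (fun τ : ℝ => Γ k τ i j) ((Γ (k + 1) t + A t * Γ k t) i j) t

/-- The controllability matrix `Θₙ(t) = [Γ₀(t) Γ₁(t) ⋯ Γ_{n−1}(t)]`. -/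
def ctrbMat {n p : ℕ} (Γ : ℕ → ℝ → Matrix (Fin n) (Fin p) ℝ) (t : ℝ) :
    Matrix (Fin n) (Fin n × Fin p) ℝ :=
  Matrix.of fun i kj => Γ (kj.1 : ℕ) t i kj.2

/-- Total controllability of `(A(t), B(t))` on `[0,1]`. -/
def TotallyControllable {n p : ℕ} (Γ : ℕ → ℝ → Matrix (Fin n) (Fin p) ℝ) : Prop :=
  ∀ t₀ t₁ : ℝ, 0 ≤ t₀ → t₀ < t₁ → t₁ ≤ 1 →
    ∃ t ∈ Set.Ioo t₀ t₁, (ctrbMat Γ t).rank = n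


/-! ### Entrywise differentiation of matrices -/

/-- Entrywise derivative of a matrix-valued function of a real variable. -/
def MatHasDeriv {m k : Type*} (F : ℝ → Matrix m k ℝ) (F' : Matrix m k ℝ) (t : ℝ) : Prop :=
  ∀ i j, HasDerivAt (fun τ => F τ i j) (F' i j) t

namespace MatHasDeriv

variable {m k l : Type*} {F G : ℝ → Matrix m k ℝ} {F' G' : Matrix m k ℝ} {t : ℝ}

theorem transpose (hF : MatHasDeriv F F' t) : MatHasDeriv (fun τ => (F τ)ᵀ) F'ᵀ t :=
  fun i j => hF j i

theorem sub (hF : MatHasDeriv F F' t) (hG : MatHasDeriv G G' t) :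
    MatHasDeriv (fun τ => F τ - G τ) (F' - G') t :=
  fun i j => (hF i j).sub (hG i j)

theorem neg (hF : MatHasDeriv F F' t) : MatHasDeriv (fun τ => -F τ) (-F') t :=
  fun i j => (hF i j).neg

theorem mul [Fintype k] {H : ℝ → Matrix k l ℝ} {H' : Matrix k l ℝ}
    (hF : MatHasDeriv F F' t) (hH : MatHasDeriv H H' t) :
    MatHasDeriv (fun τ => F τ * H τ) (F' * H t + F t * H') t := by
  intro i j
  have h := HasDerivAt.fun_sum (u := Finset.univ) (fun x _ => (hF i x).mul (hH x j))
  simp only [Matrix.mul_apply, Matrix.add_apply, ← Finset.sum_add_distrib]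
  exact h

theorem mulVec [Fintype k] (hF : MatHasDeriv F F' t) (v : k → ℝ) (i : m) :
    HasDerivAt (fun τ => (F τ *ᵥ v) i) ((F' *ᵥ v) i) t :=
  HasDerivAt.fun_sum (u := Finset.univ) (fun x _ => (hF i x).mul_const (v x))

theorem vecMul [Fintype m] (hF : MatHasDeriv F F' t) (v : m → ℝ) (j : k) :
    HasDerivAt (fun τ => (v ᵥ* F τ) j) ((v ᵥ* F') j) t :=
  HasDerivAt.fun_sum (u := Finset.univ) (fun x _ => (hF x j).const_mul (v x))

attribute [local instance] Matrix.linftyOpNormedRing Matrix.linftyOpNormedAlgebra in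
theorem inv [Fintype m] [DecidableEq m] {P : ℝ → Matrix m m ℝ} {P' : Matrix m m ℝ}
    (hP : MatHasDeriv P P' t) (hu : IsUnit (P t)) :
    MatHasDeriv (fun τ => (P τ)⁻¹) (-((P t)⁻¹ * P' * (P t)⁻¹)) t := by
  have h1 : HasDerivAt P P' t := hasDerivAt_pi.2 fun i => hasDerivAt_pi.2 fun j => hP i j
  obtain ⟨u, hu⟩ := hu
  have h2 := hasFDerivAt_ringInverse (𝕜 := ℝ) u
  rw [hu] at h2
  have h3 := h2.comp_hasDerivAt t h1
  intro i j
  have h4 := hasDerivAt_pi.1 (hasDerivAt_pi.1 h3 i) j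
  simpa [← hu, ← Matrix.nonsing_inv_eq_ringInverse] using h4

end MatHasDeriv

/-! ### Scalar and linear ODE facts -/

theorem HasDerivAt.dotProduct_fun {k : Type*} [Fintype k] {x y : ℝ → k → ℝ} {x' y' : k → ℝ}
    {t : ℝ} (hx : ∀ i, HasDerivAt (fun τ => x τ i) (x' i) t)
    (hy : ∀ i, HasDerivAt (fun τ => y τ i) (y' i) t) :
    HasDerivAt (fun τ => x τ ⬝ᵥ y τ) (x' ⬝ᵥ y t + x t ⬝ᵥ y') t := by
  have h := HasDerivAt.fun_sum (u := Finset.univ) (fun i _ => (hx i).mul (hy i))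
  simp only [dotProduct, ← Finset.sum_add_distrib]
  exact h

/-- The derivative vanishes on a nondegenerate closed interval where the function is constant,
endpoints included. -/
theorem deriv_zero_of_const_on_Icc {f f' : ℝ → ℝ} {a b c : ℝ} (hab : a < b)
    (hf : ∀ t, HasDerivAt f (f' t) t) (hc : ∀ t ∈ Set.Icc a b, f t = c) :
    ∀ t ∈ Set.Icc a b, f' t = 0 := by
  intro t ht
  have h1 : HasDerivWithinAt f 0 (Set.Icc a b) t :=
    (hasDerivWithinAt_const t _ c).congr hc (hc t ht)
  exact (uniqueDiffOn_Icc hab t ht).eq_deriv _ (hf t).hasDerivWithinAt h1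

theorem const_of_deriv_zero {f : ℝ → ℝ} (hf : ∀ t, HasDerivAt f 0 t) (a b : ℝ) : f a = f b :=
  is_const_of_deriv_eq_zero (fun t => (hf t).differentiableAt) (fun t => (hf t).deriv) a b

attribute [local instance] Matrix.linftyOpNormedRing in
/-- A solution of `x' = A x` on `[a,b]` that vanishes at one endpoint vanishes at the other. -/
theorem linear_ode_zero {n : ℕ} {A : ℝ → Matrix (Fin n) (Fin n) ℝ} (hA : Continuous A)
    {x : ℝ → Fin n → ℝ} {a b : ℝ} (hab : a ≤ b)
    (hx : ∀ t ∈ Set.Icc a b, ∀ i, HasDerivAt (fun τ => x τ i) ((A t *ᵥ x t) i) t) :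
    x a = 0 ↔ x b = 0 := by
  have hx' : ∀ t ∈ Set.Icc a b, HasDerivAt x (A t *ᵥ x t) t :=
    fun t ht => hasDerivAt_pi.2 (hx t ht)
  have hc : ContinuousOn x (Set.Icc a b) := fun t ht => (hx' t ht).continuousAt.continuousWithinAt
  obtain ⟨K, hK⟩ := isCompact_Icc.exists_bound_of_continuousOn (s := Set.Icc a b) hA.continuousOn
  have hL : ∀ t ∈ Set.Icc a b, LipschitzOnWith K.toNNReal (fun y => A t *ᵥ y) Set.univ := by
    intro t ht
    refine (LipschitzWith.of_dist_le_mul fun y z => ?_).lipschitzOnWith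
    rw [dist_eq_norm, dist_eq_norm, ← Matrix.mulVec_sub]
    exact (Matrix.linfty_opNorm_mulVec _ _).trans
      (mul_le_mul_of_nonneg_right ((hK t ht).trans (Real.le_coe_toNNReal K)) (norm_nonneg _))
  have h0 : ∀ t, HasDerivAt (fun _ : ℝ => (0 : Fin n → ℝ)) (A t *ᵥ 0) t := by
    intro t; rw [Matrix.mulVec_zero]; exact hasDerivAt_const t _
  constructor
  · intro h
    exact ODE_solution_unique_of_mem_Icc_right (v := fun t y => A t *ᵥ y) (s := fun _ => Set.univ)
      (g := fun _ => 0)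
      (fun t ht => hL t (Set.Ico_subset_Icc_self ht)) hc
      (fun t ht => (hx' t (Set.Ico_subset_Icc_self ht)).hasDerivWithinAt) (fun _ _ => trivial)
      continuousOn_const (fun t _ => (h0 t).hasDerivWithinAt) (fun _ _ => trivial) h
      (Set.right_mem_Icc.2 hab)
  · intro h
    exact ODE_solution_unique_of_mem_Icc_left (v := fun t y => A t *ᵥ y) (s := fun _ => Set.univ)
      (g := fun _ => 0)
      (fun t ht => hL t (Set.Ioc_subset_Icc_self ht)) hc
      (fun t ht => (hx' t (Set.Ioc_subset_Icc_self ht)).hasDerivWithinAt) (fun _ _ => trivial)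
      continuousOn_const (fun t _ => (h0 t).hasDerivWithinAt) (fun _ _ => trivial) h
      (Set.left_mem_Icc.2 hab)

/-! ### Controllability -/

/-- If `z' = -Aᵀ z` and `zᵀ B = 0` on `[a,b] ⊆ [0,1]`, repeated differentiation gives
`zᵀ Γ_k = 0` for all `k < n`, so total controllability makes `z` vanish somewhere in `(a,b)`. -/
theorem adjoint_zero_of_controllable {n p : ℕ} {A : ℝ → Matrix (Fin n) (Fin n) ℝ}
    {B : ℝ → Matrix (Fin n) (Fin p) ℝ} {Γ : ℕ → ℝ → Matrix (Fin n) (Fin p) ℝ}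
    (hΓ : IsCtrbMatSeq A B Γ) (hTC : TotallyControllable Γ)
    {z z' : ℝ → Fin n → ℝ} {a b : ℝ} (ha : 0 ≤ a) (hab : a < b) (hb : b ≤ 1)
    (hz : ∀ t i, HasDerivAt (fun τ => z τ i) (z' t i) t)
    (hz' : ∀ t ∈ Set.Icc a b, z' t = -(z t ᵥ* A t))
    (hzB : ∀ t ∈ Set.Icc a b, z t ᵥ* B t = 0) :
    ∃ t ∈ Set.Ioo a b, z t = 0 := by
  obtain ⟨hΓ0, hΓs⟩ := hΓ
  have key : ∀ k, k ≤ n → ∀ t ∈ Set.Icc a b, z t ᵥ* Γ k t = 0 := by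
    intro k
    induction k with
    | zero => intro _ t ht; rw [hΓ0]; exact hzB t ht
    | succ k ih =>
      intro hk t ht
      funext j
      have hd : ∀ t, HasDerivAt (fun τ => (z τ ᵥ* Γ k τ) j)
          ((z' t) ⬝ᵥ (fun i => Γ k t i j) +
            z t ⬝ᵥ (fun i => (Γ (k + 1) t + A t * Γ k t) i j)) t := fun t =>
        HasDerivAt.dotProduct_fun (hz t) (fun i => hΓs k (by omega) t i j)
      have h := deriv_zero_of_const_on_Icc hab hd (c := 0)
        (fun t ht => by rw [ih (by omega) t ht]; rfl) t ht
      have e : z t ⬝ᵥ (fun i => (Γ (k + 1) t + A t * Γ k t) i j) =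
          (z t ᵥ* Γ (k + 1) t) j + ((z t ᵥ* A t) ᵥ* Γ k t) j := by
        rw [Matrix.vecMul_vecMul, ← Pi.add_apply, ← Matrix.vecMul_add]; rfl
      have e' : (z' t) ⬝ᵥ (fun i => Γ k t i j) = -((z t ᵥ* A t) ᵥ* Γ k t) j := by
        rw [hz' t ht, neg_dotProduct]; rfl
      rw [e, e'] at h
      simpa using h
  obtain ⟨t, ht, hr⟩ := hTC a b ha hab hb
  refine ⟨t, ht, ?_⟩
  have hli : LinearIndependent ℝ (ctrbMat Γ t).row := by
    rw [linearIndependent_iff_card_eq_finrank_span, Set.finrank, ← Matrix.rank_eq_finrank_span_row,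
      hr, Fintype.card_fin]
  rw [← Matrix.vecMul_injective_iff] at hli
  apply hli
  change z t ᵥ* ctrbMat Γ t = 0 ᵥ* ctrbMat Γ t
  rw [Matrix.zero_vecMul]
  funext kj
  exact congrFun (key kj.1 kj.1.2.le t (Set.Ioo_subset_Icc_self ht)) kj.2

/-! ### Blocks of the Hamiltonian transition matrix -/

/-- The four blocks of a fundamental matrix of the Hamiltonian system, normalized at time `s`:
`P, R, S, T` stand for `Φ₁₁, Φ₁₂, Φ₂₁, Φ₂₂` as functions of the first time argument. -/
structure HamBlocks {n p : ℕ} (A Q : ℝ → Matrix (Fin n) (Fin n) ℝ)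
    (B : ℝ → Matrix (Fin n) (Fin p) ℝ) (s : ℝ) (P R S T : ℝ → Matrix (Fin n) (Fin n) ℝ) :
    Prop where
  P_init : P s = 1
  R_init : R s = 0
  S_init : S s = 0
  T_init : T s = 1
  P_deriv : ∀ t, MatHasDeriv P (A t * P t - B t * (B t)ᵀ * S t) t
  R_deriv : ∀ t, MatHasDeriv R (A t * R t - B t * (B t)ᵀ * T t) t
  S_deriv : ∀ t, MatHasDeriv S (-(Q t * P t) - (A t)ᵀ * S t) t
  T_deriv : ∀ t, MatHasDeriv T (-(Q t * R t) - (A t)ᵀ * T t) t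

theorem IsSTM.hamBlocks {n p : ℕ} {A Q : ℝ → Matrix (Fin n) (Fin n) ℝ}
    {B : ℝ → Matrix (Fin n) (Fin p) ℝ} {Φ : ℝ → ℝ → Matrix (Fin n ⊕ Fin n) (Fin n ⊕ Fin n) ℝ}
    (hΦ : IsSTM (fun t => fromBlocks (A t) (-(B t * (B t)ᵀ)) (-(Q t)) (-(A t)ᵀ)) Φ) (s : ℝ) :
    HamBlocks A Q B s (fun t => (Φ t s).toBlocks₁₁) (fun t => (Φ t s).toBlocks₁₂)
      (fun t => (Φ t s).toBlocks₂₁) (fun t => (Φ t s).toBlocks₂₂) := by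
  obtain ⟨h0, hd⟩ := hΦ
  have hm : ∀ t, fromBlocks (A t) (-(B t * (B t)ᵀ)) (-(Q t)) (-(A t)ᵀ) * Φ t s =
      fromBlocks
        (A t * (Φ t s).toBlocks₁₁ - B t * (B t)ᵀ * (Φ t s).toBlocks₂₁)
        (A t * (Φ t s).toBlocks₁₂ - B t * (B t)ᵀ * (Φ t s).toBlocks₂₂)
        (-(Q t * (Φ t s).toBlocks₁₁) - (A t)ᵀ * (Φ t s).toBlocks₂₁)
        (-(Q t * (Φ t s).toBlocks₁₂) - (A t)ᵀ * (Φ t s).toBlocks₂₂) := by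
    intro t
    conv_lhs => rw [← fromBlocks_toBlocks (Φ t s)]
    rw [fromBlocks_multiply]
    simp only [Matrix.neg_mul, sub_eq_add_neg]
  replace hd := fun t => hm t ▸ hd s t
  have h1 : Φ s s = fromBlocks 1 0 0 1 := by rw [h0, fromBlocks_one]
  exact
    { P_init := by rw [h1]; rfl
      R_init := by rw [h1]; rfl
      S_init := by rw [h1]; rfl
      T_init := by rw [h1]; rfl
      P_deriv := fun t i j => hd t (Sum.inl i) (Sum.inl j)
      R_deriv := fun t i j => hd t (Sum.inl i) (Sum.inr j)
      S_deriv := fun t i j => hd t (Sum.inr i) (Sum.inl j)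
      T_deriv := fun t i j => hd t (Sum.inr i) (Sum.inr j) }

theorem MatHasDeriv.const_of_zero {m k : Type*} {F : ℝ → Matrix m k ℝ}
    (hF : ∀ t, MatHasDeriv F 0 t) (a b : ℝ) : F a = F b := by
  ext i j
  exact const_of_deriv_zero (fun t => hF t i j) a b

namespace HamBlocks

variable {n p : ℕ} {A Q : ℝ → Matrix (Fin n) (Fin n) ℝ} {B : ℝ → Matrix (Fin n) (Fin p) ℝ}
  {s : ℝ} {P R S T : ℝ → Matrix (Fin n) (Fin n) ℝ}

/-- Conservation of the symplectic form: for two matrix solutions `(X₁, Y₁)`, `(X₂, Y₂)` of the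
Hamiltonian system the Wronskian `X₁ᵀ Y₂ - Y₁ᵀ X₂` is constant. -/
theorem wronskian_const (hQ : ∀ t, (Q t)ᵀ = Q t) {X₁ Y₁ X₂ Y₂ : ℝ → Matrix (Fin n) (Fin n) ℝ}
    (hX₁ : ∀ t, MatHasDeriv X₁ (A t * X₁ t - B t * (B t)ᵀ * Y₁ t) t)
    (hY₁ : ∀ t, MatHasDeriv Y₁ (-(Q t * X₁ t) - (A t)ᵀ * Y₁ t) t)
    (hX₂ : ∀ t, MatHasDeriv X₂ (A t * X₂ t - B t * (B t)ᵀ * Y₂ t) t)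
    (hY₂ : ∀ t, MatHasDeriv Y₂ (-(Q t * X₂ t) - (A t)ᵀ * Y₂ t) t) (a b : ℝ) :
    (X₁ a)ᵀ * Y₂ a - (Y₁ a)ᵀ * X₂ a = (X₁ b)ᵀ * Y₂ b - (Y₁ b)ᵀ * X₂ b := by
  refine MatHasDeriv.const_of_zero (F := fun t => (X₁ t)ᵀ * Y₂ t - (Y₁ t)ᵀ * X₂ t) ?_ a b
  intro t
  have h := ((hX₁ t).transpose.mul (hY₂ t)).sub ((hY₁ t).transpose.mul (hX₂ t))
  convert h using 1
  simp only [Matrix.transpose_sub, Matrix.transpose_mul, Matrix.transpose_neg,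
    Matrix.transpose_transpose, hQ t, Matrix.sub_mul, Matrix.mul_sub, Matrix.neg_mul,
    Matrix.mul_neg, Matrix.mul_assoc]
  abel

/-- `Φ₁₁ᵀ Φ₂₂ - Φ₂₁ᵀ Φ₁₂ = 1`. -/
theorem wronskian_PR (h : HamBlocks A Q B s P R S T) (hQ : ∀ t, (Q t)ᵀ = Q t) (t : ℝ) :
    (P t)ᵀ * T t - (S t)ᵀ * R t = 1 := by
  rw [wronskian_const hQ h.P_deriv h.S_deriv h.R_deriv h.T_deriv t s]
  simp [h.P_init, h.R_init, h.S_init, h.T_init]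

/-- `Φ₁₁ᵀ Φ₂₁` is symmetric. -/
theorem wronskian_PP (h : HamBlocks A Q B s P R S T) (hQ : ∀ t, (Q t)ᵀ = Q t) (t : ℝ) :
    (P t)ᵀ * S t = (S t)ᵀ * P t := by
  rw [← sub_eq_zero, wronskian_const hQ h.P_deriv h.S_deriv h.P_deriv h.S_deriv t s]
  simp [h.P_init, h.S_init]

/-- `Φ₁₂ᵀ Φ₂₂` is symmetric. -/
theorem wronskian_RR (h : HamBlocks A Q B s P R S T) (hQ : ∀ t, (Q t)ᵀ = Q t) (t : ℝ) :
    (R t)ᵀ * T t = (T t)ᵀ * R t := by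
  rw [← sub_eq_zero, wronskian_const hQ h.R_deriv h.T_deriv h.R_deriv h.T_deriv t s]
  simp [h.R_init, h.T_init]

/-- The symplectic identities say that `[[Tᵀ, -Rᵀ], [-Sᵀ, Pᵀ]]` is a left inverse of
`[[P, R], [S, T]]`; being also a right inverse, it yields the transposed identity. -/
theorem symm_PR (h : HamBlocks A Q B s P R S T) (hQ : ∀ t, (Q t)ᵀ = Q t) (t : ℝ) :
    R t * (P t)ᵀ = P t * (R t)ᵀ := by
  have e1 := h.wronskian_PR hQ t
  have e2 := h.wronskian_PP hQ t
  have e3 := h.wronskian_RR hQ t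
  have e4 : (T t)ᵀ * P t - (R t)ᵀ * S t = 1 := by
    have := congrArg Matrix.transpose e1
    simpa [Matrix.transpose_mul] using this
  have hL : fromBlocks (T t)ᵀ (-(R t)ᵀ) (-(S t)ᵀ) (P t)ᵀ * fromBlocks (P t) (R t) (S t) (T t)
      = 1 := by
    rw [fromBlocks_multiply, ← fromBlocks_one]
    congr 1
    · rw [← e4, Matrix.neg_mul, sub_eq_add_neg]
    · rw [Matrix.neg_mul, e3, add_neg_cancel]
    · rw [Matrix.neg_mul, e2, neg_add_cancel]
    · rw [← e1, Matrix.neg_mul]; abel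
  have hR := mul_eq_one_comm.1 hL
  rw [fromBlocks_multiply, ← fromBlocks_one] at hR
  have := (fromBlocks_inj.1 hR).2.1
  rw [Matrix.mul_neg] at this
  rw [← sub_eq_zero, ← this]; abel

/-- `Φ₁₁(t,s)` is invertible. If `Φ₁₁(t,s) v = 0`, the solution `(x, y)` starting at `(v, 0)` has
`xᵀ y = 0` at both `s` and `t`; as `(xᵀ y)' = -|Bᵀ y|² - xᵀ Q x ≤ 0`, this forces `Bᵀ y = 0` in
between, so `x' = A x` there and `x(t) = 0` gives `v = x(s) = 0`. -/
theorem isUnit_P (h : HamBlocks A Q B s P R S T) (hA : Continuous A)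
    (hQ : ∀ t, (Q t).PosSemidef) (t : ℝ) : IsUnit (P t) := by
  rw [Matrix.isUnit_iff_isUnit_det, isUnit_iff_ne_zero]
  intro hdet
  obtain ⟨v, hv, hPv⟩ := Matrix.exists_mulVec_eq_zero_iff.2 hdet
  apply hv
  have hx := fun τ => (h.P_deriv τ).mulVec v
  have hy := fun τ => (h.S_deriv τ).mulVec v
  have hg : ∀ τ, HasDerivAt (fun τ => (P τ *ᵥ v) ⬝ᵥ (S τ *ᵥ v))
      (-(((B τ)ᵀ *ᵥ (S τ *ᵥ v)) ⬝ᵥ ((B τ)ᵀ *ᵥ (S τ *ᵥ v)) +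
        (P τ *ᵥ v) ⬝ᵥ (Q τ *ᵥ (P τ *ᵥ v)))) τ := by
    intro τ
    convert HasDerivAt.dotProduct_fun (hx τ) (hy τ) using 1
    have e1 : (A τ *ᵥ (P τ *ᵥ v)) ⬝ᵥ (S τ *ᵥ v) =
        (P τ *ᵥ v) ⬝ᵥ ((A τ)ᵀ *ᵥ (S τ *ᵥ v)) := by
      rw [dotProduct_comm, Matrix.dotProduct_mulVec, Matrix.mulVec_transpose, dotProduct_comm]
    have e2 : (B τ *ᵥ ((B τ)ᵀ *ᵥ (S τ *ᵥ v))) ⬝ᵥ (S τ *ᵥ v) =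
        ((B τ)ᵀ *ᵥ (S τ *ᵥ v)) ⬝ᵥ ((B τ)ᵀ *ᵥ (S τ *ᵥ v)) := by
      rw [dotProduct_comm, Matrix.dotProduct_mulVec, Matrix.mulVec_transpose]
    simp only [Matrix.sub_mulVec, Matrix.neg_mulVec, ← Matrix.mulVec_mulVec, sub_dotProduct,
      dotProduct_sub, dotProduct_neg, e1, e2]
    ring
  have hB0 : ∀ τ, 0 ≤ ((B τ)ᵀ *ᵥ (S τ *ᵥ v)) ⬝ᵥ ((B τ)ᵀ *ᵥ (S τ *ᵥ v)) := fun τ =>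
    Finset.sum_nonneg fun i _ => mul_self_nonneg _
  have hQ0 : ∀ τ, 0 ≤ (P τ *ᵥ v) ⬝ᵥ (Q τ *ᵥ (P τ *ᵥ v)) := fun τ => by
    simpa using (hQ τ).dotProduct_mulVec_nonneg (P τ *ᵥ v)
  have hanti : Antitone (fun τ => (P τ *ᵥ v) ⬝ᵥ (S τ *ᵥ v)) :=
    antitone_of_hasDerivAt_nonpos hg fun τ => by
      simp only [Pi.zero_apply]; linarith [hB0 τ, hQ0 τ]
  have hgs : (P s *ᵥ v) ⬝ᵥ (S s *ᵥ v) = 0 := by simp [h.S_init]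
  have hgt : (P t *ᵥ v) ⬝ᵥ (S t *ᵥ v) = 0 := by simp [hPv]
  -- `t` may lie on either side of `s`, so the endpoints are treated symmetrically.
  have main : ∀ a b : ℝ, a < b → (P a *ᵥ v) ⬝ᵥ (S a *ᵥ v) = 0 → (P b *ᵥ v) ⬝ᵥ (S b *ᵥ v) = 0 →
      (P a *ᵥ v = 0 ↔ P b *ᵥ v = 0) := by
    intro a b hab ha hb
    have hz := deriv_zero_of_const_on_Icc hab hg (c := 0) (fun τ hτ =>
      le_antisymm (ha ▸ hanti hτ.1) (hb ▸ hanti hτ.2))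
    refine linear_ode_zero (x := fun τ => P τ *ᵥ v) hA hab.le ?_
    intro τ hτ i
    have hBy : (B τ)ᵀ *ᵥ (S τ *ᵥ v) = 0 :=
      dotProduct_self_eq_zero.1 (by linarith [hz τ hτ, hB0 τ, hQ0 τ])
    convert hx τ i using 1
    rw [Matrix.sub_mulVec, ← Matrix.mulVec_mulVec, ← Matrix.mulVec_mulVec,
      ← Matrix.mulVec_mulVec, hBy, Matrix.mulVec_zero, sub_zero]
  have hsv : P s *ᵥ v = v := by rw [h.P_init, Matrix.one_mulVec]
  rcases lt_trichotomy s t with hst | rfl | hst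
  · rw [← hsv]; exact (main s t hst hgs hgt).2 hPv
  · rw [← hsv]; exact hPv
  · rw [← hsv]; exact (main t s hst hgt hgs).1 hPv

/-- `W = -Φ₁₁⁻¹ Φ₁₂` satisfies `W' = Φ₁₁⁻¹ B Bᵀ Φ₁₁⁻ᵀ`, because the Schur complement
`Φ₂₂ - Φ₂₁ Φ₁₁⁻¹ Φ₁₂` equals `Φ₁₁⁻ᵀ`. -/
theorem W_deriv (h : HamBlocks A Q B s P R S T) (hA : Continuous A)
    (hQ : ∀ t, (Q t).PosSemidef) (t : ℝ) :
    MatHasDeriv (fun τ => -((P τ)⁻¹ * R τ))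
      ((P t)⁻¹ * (B t * ((B t)ᵀ * ((P t)⁻¹)ᵀ))) t := by
  have hQs : ∀ t, (Q t)ᵀ = Q t := fun t => by simpa using (hQ t).isHermitian.eq
  have hu := h.isUnit_P hA hQ t
  have hud := (Matrix.isUnit_iff_isUnit_det _).1 hu
  have hd := (((h.P_deriv t).inv hu).mul (h.R_deriv t)).neg
  convert hd using 1
  have hSchur : ((P t)⁻¹)ᵀ = T t - S t * ((P t)⁻¹ * R t) := by
    have e1 := h.wronskian_PR hQs t
    have e2 := h.wronskian_PP hQs t
    have e3 : (P t)ᵀ * (T t - S t * ((P t)⁻¹ * R t)) = 1 := by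
      rw [Matrix.mul_sub, ← Matrix.mul_assoc, e2, Matrix.mul_assoc,
        Matrix.mul_nonsing_inv_cancel_left _ _ hud, e1]
    rw [Matrix.transpose_nonsing_inv]
    exact Matrix.inv_eq_right_inv e3
  have hPi : (P t)⁻¹ * (A t * (P t * ((P t)⁻¹ * R t))) = (P t)⁻¹ * (A t * R t) := by
    rw [Matrix.mul_nonsing_inv_cancel_left _ _ hud]
  rw [hSchur]
  simp only [Matrix.sub_mul, Matrix.mul_sub, Matrix.neg_mul, Matrix.mul_assoc, hPi]
  abel

/-- Strict monotonicity of `W = -Φ₁₁⁻¹ Φ₁₂` in the Loewner order. If `vᵀ W v` takes equal values at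
`a` and `b`, then `z = Φ₁₁⁻ᵀ v` satisfies `Bᵀ z = 0` and hence `z' = -Aᵀ z` on `[a,b]`,
contradicting controllability. -/
theorem posDef_W_sub (h : HamBlocks A Q B s P R S T) (hA : Continuous A)
    (hQ : ∀ t, (Q t).PosSemidef) {Γ : ℕ → ℝ → Matrix (Fin n) (Fin p) ℝ}
    (hΓ : IsCtrbMatSeq A B Γ) (hTC : TotallyControllable Γ)
    {a b : ℝ} (ha : 0 ≤ a) (hab : a < b) (hb : b ≤ 1) :
    (-((P b)⁻¹ * R b) - -((P a)⁻¹ * R a)).PosDef := by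
  have hQs : ∀ t, (Q t)ᵀ = Q t := fun t => by simpa using (hQ t).isHermitian.eq
  have hud := fun t => (Matrix.isUnit_iff_isUnit_det _).1 (h.isUnit_P hA hQ t)
  have hsymm : ∀ t, ((P t)⁻¹ * R t)ᵀ = (P t)⁻¹ * R t := by
    intro t
    have hudT : IsUnit ((P t)ᵀ).det := by rw [Matrix.det_transpose]; exact hud t
    have e := h.symm_PR hQs t
    rw [Matrix.transpose_mul, Matrix.transpose_nonsing_inv]
    calc (R t)ᵀ * ((P t)ᵀ)⁻¹ = (P t)⁻¹ * (P t * (R t)ᵀ) * ((P t)ᵀ)⁻¹ := by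
          rw [Matrix.nonsing_inv_mul_cancel_left _ _ (hud t)]
      _ = (P t)⁻¹ * R t := by
          rw [← e, ← Matrix.mul_assoc, Matrix.mul_nonsing_inv_cancel_right _ _ hudT]
  refine Matrix.PosDef.of_dotProduct_mulVec_pos ?_ ?_
  · rw [Matrix.IsHermitian, Matrix.conjTranspose_eq_transpose_of_trivial, Matrix.transpose_sub,
      Matrix.transpose_neg, Matrix.transpose_neg, hsymm, hsymm]
  intro v hv
  have hw : ∀ t, HasDerivAt (fun τ => v ⬝ᵥ (-((P τ)⁻¹ * R τ) *ᵥ v))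
      (((v ᵥ* (P t)⁻¹) ᵥ* B t) ⬝ᵥ ((v ᵥ* (P t)⁻¹) ᵥ* B t)) t := by
    intro t
    convert HasDerivAt.dotProduct_fun (x := fun _ => v) (x' := 0)
      (fun i => hasDerivAt_const t (v i)) ((h.W_deriv hA hQ t).mulVec v) using 1
    rw [zero_dotProduct, zero_add]
    simp only [← Matrix.mulVec_mulVec, Matrix.dotProduct_mulVec, Matrix.mulVec_transpose]
  have hw0 : ∀ t, 0 ≤ ((v ᵥ* (P t)⁻¹) ᵥ* B t) ⬝ᵥ ((v ᵥ* (P t)⁻¹) ᵥ* B t) := fun t =>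
    Finset.sum_nonneg fun i _ => mul_self_nonneg _
  have hmono : Monotone (fun τ => v ⬝ᵥ (-((P τ)⁻¹ * R τ) *ᵥ v)) :=
    monotone_of_hasDerivAt_nonneg hw hw0
  rw [star_trivial, Matrix.sub_mulVec, dotProduct_sub, sub_pos]
  refine lt_of_le_of_ne (hmono hab.le) fun heq => ?_
  have hz0 := deriv_zero_of_const_on_Icc hab hw (c := v ⬝ᵥ (-((P a)⁻¹ * R a) *ᵥ v))
    (fun τ hτ => le_antisymm (heq ▸ hmono hτ.2) (hmono hτ.1))
  have hzB : ∀ t ∈ Set.Icc a b, (v ᵥ* (P t)⁻¹) ᵥ* B t = 0 := fun t ht =>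
    dotProduct_self_eq_zero.1 (hz0 t ht)
  obtain ⟨t, -, hzt⟩ := adjoint_zero_of_controllable hΓ hTC (z := fun t => v ᵥ* (P t)⁻¹) ha hab hb
    (fun t => ((h.P_deriv t).inv (h.isUnit_P hA hQ t)).vecMul v) (by
      intro t ht
      have e : -((P t)⁻¹ * (A t * P t - B t * (B t)ᵀ * S t) * (P t)⁻¹) =
          (P t)⁻¹ * B t * ((B t)ᵀ * S t * (P t)⁻¹) - (P t)⁻¹ * A t := by
        have : (P t)⁻¹ * (A t * P t) * (P t)⁻¹ = (P t)⁻¹ * A t := by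
          rw [← Matrix.mul_assoc, Matrix.mul_nonsing_inv_cancel_right _ _ (hud t)]
        rw [Matrix.mul_sub, Matrix.sub_mul, this, neg_sub]
        simp only [Matrix.mul_assoc]
      rw [e, Matrix.vecMul_sub, ← Matrix.vecMul_vecMul, ← Matrix.vecMul_vecMul v, hzB t ht,
        Matrix.zero_vecMul, zero_sub, Matrix.vecMul_vecMul]) hzB
  apply hv
  have : v = (v ᵥ* (P t)⁻¹) ᵥ* P t := by
    rw [Matrix.vecMul_vecMul, Matrix.nonsing_inv_mul _ (hud t), Matrix.vecMul_one]
  rw [this]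
  change v ᵥ* (P t)⁻¹ = 0 at hzt
  rw [hzt, Matrix.zero_vecMul]

end HamBlocks

theorem stmt_5 {n p : ℕ} (hn : 1 ≤ n) (hp : 1 ≤ p)
    (A Q : ℝ → Matrix (Fin n) (Fin n) ℝ) (B : ℝ → Matrix (Fin n) (Fin p) ℝ)
    (hA : Continuous A) (hB : Continuous B) (hQ : Continuous Q)
    (hQpsd : ∀ t, (Q t).PosSemidef)
    (hAsm : ∀ i j, ContDiff ℝ (n - 1 : ℕ) fun t => A t i j)
    (hBsm : ∀ i j, ContDiff ℝ (n : ℕ) fun t => B t i j)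
    (Γ : ℕ → ℝ → Matrix (Fin n) (Fin p) ℝ)
    (hΓ : IsCtrbMatSeq A B Γ)
    (hTC : TotallyControllable Γ)
    (Φ : ℝ → ℝ → Matrix (Fin n ⊕ Fin n) (Fin n ⊕ Fin n) ℝ)
    (hΦ : IsSTM (fun t => fromBlocks (A t) (-(B t * (B t)ᵀ)) (-(Q t)) (-(A t)ᵀ)) Φ)
    (s t₁ t₂ : ℝ) (hs : s ∈ Set.Icc (0:ℝ) 1) (ht₁ : t₁ ∈ Set.Icc (0:ℝ) 1)
    (ht₂ : t₂ ∈ Set.Icc (0:ℝ) 1) :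
    (s < t₁ → t₁ < t₂ →
      (-(((Φ t₁ s).toBlocks₁₁)⁻¹ * (Φ t₁ s).toBlocks₁₂)).PosDef ∧
      (-(((Φ t₂ s).toBlocks₁₁)⁻¹ * (Φ t₂ s).toBlocks₁₂) -
        -(((Φ t₁ s).toBlocks₁₁)⁻¹ * (Φ t₁ s).toBlocks₁₂)).PosDef) ∧
    (t₁ < t₂ → t₂ < s →
      (-(((Φ t₂ s).toBlocks₁₁)⁻¹ * (Φ t₂ s).toBlocks₁₂) -
        -(((Φ t₁ s).toBlocks₁₁)⁻¹ * (Φ t₁ s).toBlocks₁₂)).PosDef ∧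
      (0 - -(((Φ t₂ s).toBlocks₁₁)⁻¹ * (Φ t₂ s).toBlocks₁₂)).PosDef) := by
  have h := hΦ.hamBlocks s
  have key : ∀ {a b : ℝ}, 0 ≤ a → a < b → b ≤ 1 →
      (-(((Φ b s).toBlocks₁₁)⁻¹ * (Φ b s).toBlocks₁₂) -
        -(((Φ a s).toBlocks₁₁)⁻¹ * (Φ a s).toBlocks₁₂)).PosDef := fun ha hab hb =>
    h.posDef_W_sub hA hQpsd hΓ hTC ha hab hb
  have hW : -(((Φ s s).toBlocks₁₁)⁻¹ * (Φ s s).toBlocks₁₂) = 0 := by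
    rw [h.R_init, Matrix.mul_zero, neg_zero]
  refine ⟨fun h1 h2 => ⟨?_, key ht₁.1 h2 ht₂.2⟩, fun h1 h2 => ⟨key ht₁.1 h1 ht₂.2, ?_⟩⟩
  · have := key hs.1 h1 ht₁.2
    rwa [hW, sub_zero] at this
  · have := key ht₂.1 h2 hs.2
    rwa [hW] at this
end

section
/- Assume (A(t), B(t)) is totally controllable on [0,1]. Let s ∈ [0,1] and let Π_s be a symmetric n×n matrix. Then the Riccati equation Π'(t) = −A(t)ᵀΠ − ΠA(t) + ΠB(t)B(t)ᵀΠ − Q(t) has a (necessarily unique) solution Π on [0,1] with Π(s) = Π_s if and only if: (i) −Φ₁₂(0,s)⁻¹Φ₁₁(0,s) ≺ Π_s whenever s > 0, and (ii) Π_s ≺ −Φ₁₂(1,s)⁻¹Φ₁₁(1,s) whenever s < 1. In that case the solution is given by Π(t) = (Φ₂₁(t,s) + Φ₂₂(t,s)Π_s)(Φ₁₁(t,s) + Φ₁₂(t,s)Π_s)⁻¹, and for every t ∈ (0,1) one has −Φ₁₂(0,t)⁻¹Φ₁₁(0,t) ≺ Π(t) ≺ −Φ₁₂(1,t)⁻¹Φ₁₁(1,t).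 -/
/-!
The argument works with trajectories `(x, y)` of the Hamiltonian system `x' = A x - B Bᵀ y`,
`y' = -Q x - Aᵀ y`, the vector solutions generated by `Φ`. Three facts carry it.

* `x ⬝ y` is nonincreasing, with derivative `-|Bᵀ y|² - x ⬝ Q x` (`IsHamSol.antitone_dot`), and the
  symplectic form of two trajectories is constant (`IsHamSol.symplectic`).
* If `x` vanishes at two distinct times of `[0, 1]`, then `x ⬝ y` is constant in between, so
  `Bᵀ y = 0`, `x = 0`, and differentiating `Bᵀ y = 0` repeatedly gives `Γ_kᵀ y = 0`; total
  controllability forces `y = 0`. Hence `Φ₁₂(e, s)` is invertible for `e ≠ s`, and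
  `S_e(s) = -Φ₁₂(e, s)⁻¹ Φ₁₁(e, s)` is the symmetric matrix for which the trajectory through
  `(v, S_e(s) v)` at time `s` satisfies `x e = 0` (`boundary_matrix`).
* If `P` solves the Riccati equation, then `z = y - P x` solves a homogeneous linear equation, and,
  for symmetric `P`, `(x ⬝ z)' = -|Bᵀ z|²`.

Necessity (`IsRiccatiSolOn.bounds`): along the trajectory through `(v, S_e(s) v)` the quantity
`x ⬝ z` is zero at `e` and `v ⬝ (S_e(s) - P s) v` at `s`, and it is monotone. Equality would give
`Bᵀ z = 0`, so `x' = (A - B Bᵀ P) x` and `x = 0`, contradicting `v ≠ 0`.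

Sufficiency (`isUnit_of_bounds`): `Y X⁻¹` solves the Riccati equation wherever
`X(t) = Φ₁₁(t, s) + Φ₁₂(t, s) Π_s` is invertible. Suppose `X(t) v = 0` with, say, `t > s`. Let
`(x, y)` be the trajectory through `(v, Π_s v)` and `(x₁, y₁)` the one through `(v, S_1(s) v)`.
Monotonicity along the difference gives `x₁(t) ⬝ y(t) ≥ x₁(t) ⬝ y₁(t) ≥ 0`, while the symplectic
form identifies `x₁(t) ⬝ y(t)` with `v ⬝ (Π_s - S_1(s)) v < 0` unless `v = 0`.

The formula for `P` holds because `z` vanishes along trajectories starting on the graph of `P s`.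
-/

open Matrix

/-- `P` solves the Riccati equation `P' = -AᵀP - PA + PBBᵀP - Q` on the set `S`
(derivatives taken entrywise, within `S`). -/
def IsRiccatiSolOn {n p : ℕ} (A Q : ℝ → Matrix (Fin n) (Fin n) ℝ)
    (B : ℝ → Matrix (Fin n) (Fin p) ℝ) (P : ℝ → Matrix (Fin n) (Fin n) ℝ)
    (S : Set ℝ) : Prop :=
  ∀ t ∈ S, ∀ (i j : Fin n),
    HasDerivWithinAt (fun τ : ℝ => P τ i j)
      ((-(A t)ᵀ * P t - P t * A t + P t * (B t * (B t)ᵀ) * P t - Q t) i j) S t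

/-! ### Calculus for vector-valued functions and linear equations -/

section Calculus

variable {ι κ : Type*} [Fintype ι]

theorem mulVec_dot [Fintype κ] (M : Matrix κ ι ℝ) (a : ι → ℝ) (b : κ → ℝ) :
    (M *ᵥ a) ⬝ᵥ b = a ⬝ᵥ (Mᵀ *ᵥ b) := by
  rw [dotProduct_comm, dotProduct_mulVec, ← mulVec_transpose, dotProduct_comm]

theorem hasDerivWithinAt_dot {S : Set ℝ} {t : ℝ} {x y : ℝ → ι → ℝ} {x' y' : ι → ℝ}
    (hx : HasDerivWithinAt x x' S t) (hy : HasDerivWithinAt y y' S t) :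
    HasDerivWithinAt (fun τ => x τ ⬝ᵥ y τ) (x' ⬝ᵥ y t + x t ⬝ᵥ y') S t := by
  rw [hasDerivWithinAt_pi] at hx hy
  have h := HasDerivWithinAt.fun_sum (u := Finset.univ) fun i _ => (hx i).mul (hy i)
  rw [Finset.sum_add_distrib] at h
  exact h

theorem hasDerivWithinAt_mulVec {S : Set ℝ} {t : ℝ} {M : ℝ → Matrix κ ι ℝ} {M' : Matrix κ ι ℝ}
    {x : ℝ → ι → ℝ} {x' : ι → ℝ}
    (hM : ∀ i j, HasDerivWithinAt (fun τ => M τ i j) (M' i j) S t)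
    (hx : HasDerivWithinAt x x' S t) :
    HasDerivWithinAt (fun τ => M τ *ᵥ x τ) (M' *ᵥ x t + M t *ᵥ x') S t := by
  rw [hasDerivWithinAt_pi]
  intro i
  exact hasDerivWithinAt_dot (x := fun τ => M τ i) (hasDerivWithinAt_pi.2 (hM i)) hx

open scoped Matrix.Norms.Operator in
/-- Forward half of `linear_ode_eq_zero`. -/
theorem linear_ode_eq_zero_right {a b : ℝ} {C : ℝ → Matrix ι ι ℝ} {x : ℝ → ι → ℝ}
    (hC : ContinuousOn C (Set.Icc a b))
    (hx : ∀ t ∈ Set.Icc a b, HasDerivWithinAt x (C t *ᵥ x t) (Set.Icc a b) t)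
    (ha : x a = 0) : ∀ t ∈ Set.Icc a b, x t = 0 := by
  obtain ⟨K, hK⟩ := isCompact_Icc.exists_bound_of_continuousOn hC
  refine eq_zero_of_abs_deriv_le_mul_abs_self_of_eq_zero_right (K := K)
    (f' := fun t => C t *ᵥ x t) (fun t ht => (hx t ht).continuousWithinAt) ?_ ha ?_
  · intro t ht
    exact (hx t ⟨ht.1, ht.2.le⟩).mono_of_mem_nhdsWithin (Icc_mem_nhdsGE_of_mem ht)
  · intro t ht
    exact (linfty_opNorm_mulVec _ _).trans
      (mul_le_mul_of_nonneg_right (hK t ⟨ht.1, ht.2.le⟩) (norm_nonneg _))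

/-- A solution of a homogeneous linear differential equation on a compact interval which vanishes
at one point of the interval vanishes identically. -/
theorem linear_ode_eq_zero {a b t₀ : ℝ} {C : ℝ → Matrix ι ι ℝ} {x : ℝ → ι → ℝ}
    (hC : ContinuousOn C (Set.Icc a b))
    (hx : ∀ t ∈ Set.Icc a b, HasDerivWithinAt x (C t *ᵥ x t) (Set.Icc a b) t)
    (ht₀ : t₀ ∈ Set.Icc a b) (h0 : x t₀ = 0) : ∀ t ∈ Set.Icc a b, x t = 0 := by
  intro t ht
  rcases le_total t₀ t with h | h
  · have hsub : Set.Icc t₀ b ⊆ Set.Icc a b := Set.Icc_subset_Icc_left ht₀.1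
    exact linear_ode_eq_zero_right (hC.mono hsub) (fun τ hτ => (hx τ (hsub hτ)).mono hsub) h0 t
      ⟨h, ht.2⟩
  · have hsub : Set.MapsTo (fun τ : ℝ => -τ) (Set.Icc (-t₀) (-a)) (Set.Icc a b) := by
      intro τ hτ
      simp only [Set.mem_Icc] at hτ ht₀ ⊢
      constructor <;> linarith
    have key := linear_ode_eq_zero_right (a := -t₀) (b := -a) (C := fun τ => -C (-τ))
      (x := fun τ => x (-τ)) ((hC.comp continuous_neg.continuousOn hsub).neg) (fun τ hτ => by
        have h1 := (hx (-τ) (hsub hτ)).scomp τ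
          ((hasDerivAt_neg τ).hasDerivWithinAt) hsub
        rw [neg_mulVec]
        rwa [neg_one_smul] at h1) (by simpa using h0) (-t) ⟨by linarith, by linarith [ht.1]⟩
    simpa using key

theorem antitoneOn_of_deriv_within {a b : ℝ} {f f' : ℝ → ℝ}
    (hf : ∀ t ∈ Set.Icc a b, HasDerivWithinAt f (f' t) (Set.Icc a b) t)
    (hf' : ∀ t ∈ Set.Icc a b, f' t ≤ 0) : AntitoneOn f (Set.Icc a b) := by
  have hd : ∀ t ∈ interior (Set.Icc a b), HasDerivAt f (f' t) t := fun t ht =>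
    (hf t (interior_subset ht)).hasDerivAt (mem_interior_iff_mem_nhds.1 ht)
  refine antitoneOn_of_deriv_nonpos (convex_Icc a b) (fun t ht => (hf t ht).continuousWithinAt)
    (fun t ht => (hd t ht).differentiableAt.differentiableWithinAt) fun t ht => ?_
  rw [(hd t ht).deriv]
  exact hf' t (interior_subset ht)

theorem deriv_eq_zero_of_const {a b c : ℝ} (hab : a < b) {f f' : ℝ → ℝ}
    (hf : ∀ t ∈ Set.Icc a b, HasDerivWithinAt f (f' t) (Set.Icc a b) t)
    (hc : ∀ t ∈ Set.Icc a b, f t = c) : ∀ t ∈ Set.Icc a b, f' t = 0 := by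
  intro t ht
  have h0 : HasDerivWithinAt f 0 (Set.Icc a b) t :=
    (hasDerivWithinAt_const t _ c).congr hc (hc t ht)
  exact (uniqueDiffOn_Icc hab t ht).eq_deriv _ (hf t ht) h0

/-- If `f' ≤ 0` on `[a, b]` and `f a = f b`, then `f' = 0` on `[a, b]`. -/
theorem deriv_eq_zero_of_antitone {a b : ℝ} (hab : a < b) {f f' : ℝ → ℝ}
    (hf : ∀ t ∈ Set.Icc a b, HasDerivWithinAt f (f' t) (Set.Icc a b) t)
    (hf' : ∀ t ∈ Set.Icc a b, f' t ≤ 0) (heq : f a = f b) : ∀ t ∈ Set.Icc a b, f' t = 0 := by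
  have hanti := antitoneOn_of_deriv_within hf hf'
  refine deriv_eq_zero_of_const (c := f a) hab hf fun t ht => le_antisymm ?_ ?_
  · exact hanti ⟨le_rfl, hab.le⟩ ht ht.1
  · rw [heq]
    exact hanti ht ⟨hab.le, le_rfl⟩ ht.2

theorem eq_zero_of_vecMul_of_rank {n : ℕ} (M : Matrix (Fin n) ι ℝ) (hM : M.rank = n)
    (y : Fin n → ℝ) (hy : Mᵀ *ᵥ y = 0) : y = 0 := by
  have htop : LinearMap.range M.mulVecLin = ⊤ := by
    apply Submodule.eq_top_of_finrank_eq
    rw [Module.finrank_fin_fun]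
    exact hM
  obtain ⟨u, hu⟩ := LinearMap.range_eq_top.1 htop y
  rw [mulVecLin_apply] at hu
  have : y ⬝ᵥ y = 0 := by
    nth_rewrite 1 [← hu]
    rw [mulVec_dot, hy, dotProduct_zero]
  exact dotProduct_self_eq_zero.1 this

end Calculus

open scoped Matrix.Norms.Operator in
theorem hasDerivAt_matrix_inv {ι : Type*} [Fintype ι] [DecidableEq ι] {X : ℝ → Matrix ι ι ℝ}
    {X' : Matrix ι ι ℝ} {t : ℝ} (hX : HasDerivAt X X' t) (hu : IsUnit (X t)) :
    HasDerivAt (fun τ => (X τ)⁻¹) (-((X t)⁻¹ * X' * (X t)⁻¹)) t := by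
  obtain ⟨u, hu⟩ := hu
  have h := hasFDerivAt_ringInverse (𝕜 := ℝ) u
  rw [hu] at h
  have h2 := h.comp_hasDerivAt t hX
  have e : (↑u⁻¹ : Matrix ι ι ℝ) = Ring.inverse (X t) := by
    rw [← hu, Ring.inverse_unit]
  simp only [e, _root_.neg_apply, ContinuousLinearMap.mulLeftRight_apply] at h2
  simp only [nonsing_inv_eq_ringInverse]
  exact h2

open scoped Matrix.Norms.Operator in
theorem hasDerivAt_mul_matrix_inv {ι : Type*} [Fintype ι] [DecidableEq ι] {X Y : ℝ → Matrix ι ι ℝ}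
    {X' Y' : Matrix ι ι ℝ} {t : ℝ}
    (hX : ∀ i j, HasDerivAt (fun τ => X τ i j) (X' i j) t)
    (hY : ∀ i j, HasDerivAt (fun τ => Y τ i j) (Y' i j) t) (hu : IsUnit (X t)) (i j : ι) :
    HasDerivAt (fun τ => (Y τ * (X τ)⁻¹) i j)
      ((Y' * (X t)⁻¹ - Y t * ((X t)⁻¹ * X' * (X t)⁻¹)) i j) t := by
  have hX1 : HasDerivAt X X' t := hasDerivAt_pi.2 fun i => hasDerivAt_pi.2 (hX i)
  have hY1 : HasDerivAt Y Y' t := hasDerivAt_pi.2 fun i => hasDerivAt_pi.2 (hY i)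
  have h : HasDerivAt (fun τ => Y τ * (X τ)⁻¹)
      (Y' * (X t)⁻¹ + Y t * -((X t)⁻¹ * X' * (X t)⁻¹)) t :=
    HasDerivAt.mul (𝔸 := Matrix ι ι ℝ) hY1 (hasDerivAt_matrix_inv hX1 hu)
  rw [mul_neg, ← sub_eq_add_neg] at h
  exact hasDerivAt_pi.1 (hasDerivAt_pi.1 h i) j

/-! ### Trajectories of the Hamiltonian system -/

section Hamiltonian

variable {n p : ℕ} {A Q : ℝ → Matrix (Fin n) (Fin n) ℝ} {B : ℝ → Matrix (Fin n) (Fin p) ℝ}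

/-- `(x, y)` is a trajectory on `ℝ` of the Hamiltonian system
`x' = A x - B Bᵀ y`, `y' = -Q x - Aᵀ y`. -/
def IsHamSol (A Q : ℝ → Matrix (Fin n) (Fin n) ℝ) (B : ℝ → Matrix (Fin n) (Fin p) ℝ)
    (x y : ℝ → Fin n → ℝ) : Prop :=
  ∀ t, HasDerivAt x (A t *ᵥ x t - (B t * (B t)ᵀ) *ᵥ y t) t ∧
    HasDerivAt y (-(Q t *ᵥ x t) - (A t)ᵀ *ᵥ y t) t

theorem IsHamSol.sub {x y x₁ y₁ : ℝ → Fin n → ℝ} (h : IsHamSol A Q B x y)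
    (h₁ : IsHamSol A Q B x₁ y₁) :
    IsHamSol A Q B (fun t => x t - x₁ t) (fun t => y t - y₁ t) := by
  intro t
  constructor
  · refine ((h t).1.sub (h₁ t).1).congr_deriv ?_
    simp only [mulVec_sub]; abel
  · refine ((h t).2.sub (h₁ t).2).congr_deriv ?_
    simp only [mulVec_sub]; abel

/-- Along a trajectory, `(x ⬝ y)' = -|Bᵀ y|² - x ⬝ Q x`. -/
theorem IsHamSol.hasDerivAt_dot {x y : ℝ → Fin n → ℝ} (h : IsHamSol A Q B x y) (t : ℝ) :
    HasDerivAt (fun τ => x τ ⬝ᵥ y τ)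
      (-(((B t)ᵀ *ᵥ y t) ⬝ᵥ ((B t)ᵀ *ᵥ y t) + x t ⬝ᵥ (Q t *ᵥ x t))) t := by
  have h1 := hasDerivWithinAt_dot (h t).1.hasDerivWithinAt (S := Set.univ)
    (h t).2.hasDerivWithinAt
  rw [hasDerivWithinAt_univ] at h1
  refine h1.congr_deriv ?_
  simp only [sub_dotProduct, dotProduct_sub, dotProduct_neg, mulVec_dot, transpose_mul,
    transpose_transpose, mulVec_mulVec]
  ring

theorem IsHamSol.deriv_nonpos (hQ : ∀ t, (Q t).PosSemidef) (x y : ℝ → Fin n → ℝ) (t : ℝ) :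
    -(((B t)ᵀ *ᵥ y t) ⬝ᵥ ((B t)ᵀ *ᵥ y t) + x t ⬝ᵥ (Q t *ᵥ x t)) ≤ 0 := by
  have h1 : 0 ≤ ((B t)ᵀ *ᵥ y t) ⬝ᵥ ((B t)ᵀ *ᵥ y t) :=
    Finset.sum_nonneg fun i _ => mul_self_nonneg _
  have h2 : 0 ≤ x t ⬝ᵥ (Q t *ᵥ x t) := by simpa using (hQ t).dotProduct_mulVec_nonneg (x t)
  linarith

theorem IsHamSol.antitone_dot (hQ : ∀ t, (Q t).PosSemidef) {x y : ℝ → Fin n → ℝ}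
    (h : IsHamSol A Q B x y) {a b : ℝ} (hab : a ≤ b) : x b ⬝ᵥ y b ≤ x a ⬝ᵥ y a :=
  antitoneOn_of_deriv_within (a := a) (b := b)
    (fun t _ => (h.hasDerivAt_dot t).hasDerivWithinAt)
    (fun t _ => IsHamSol.deriv_nonpos hQ x y t) ⟨le_rfl, hab⟩ ⟨hab, le_rfl⟩ hab

/-- The symplectic form `x ⬝ y₁ - y ⬝ x₁` of two trajectories is constant in time. -/
theorem IsHamSol.symplectic (hQ : ∀ t, (Q t).PosSemidef) {x y x₁ y₁ : ℝ → Fin n → ℝ}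
    (h : IsHamSol A Q B x y) (h₁ : IsHamSol A Q B x₁ y₁) (a b : ℝ) :
    x a ⬝ᵥ y₁ a - y a ⬝ᵥ x₁ a = x b ⬝ᵥ y₁ b - y b ⬝ᵥ x₁ b := by
  have hd : ∀ t, HasDerivAt (fun τ => x τ ⬝ᵥ y₁ τ - y τ ⬝ᵥ x₁ τ) 0 t := by
    intro t
    have h1 := hasDerivWithinAt_dot (h t).1.hasDerivWithinAt (S := Set.univ)
      (h₁ t).2.hasDerivWithinAt
    have h2 := hasDerivWithinAt_dot (h t).2.hasDerivWithinAt (S := Set.univ)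
      (h₁ t).1.hasDerivWithinAt
    have h3 := h1.sub h2
    rw [hasDerivWithinAt_univ] at h3
    refine h3.congr_deriv ?_
    have hQt : (Q t)ᵀ = Q t := by simpa using (hQ t).1.eq
    simp only [sub_dotProduct, neg_dotProduct, dotProduct_sub, dotProduct_neg, mulVec_dot,
      transpose_mul, transpose_transpose, hQt]
    ring
  exact is_const_of_deriv_eq_zero (fun t => (hd t).differentiableAt) (fun t => (hd t).deriv) a b

/-- Under total controllability a trajectory whose `x`-part vanishes at two distinct points of
`[0, 1]` is trivial in between: `x ⬝ y` has vanishing derivative, so `Bᵀ y = 0`, so `x = 0`, and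
repeated differentiation gives `Γ_kᵀ y = 0` for all `k`. -/
theorem IsHamSol.eq_zero_of_two_zeros (hA : Continuous A) (hQ : ∀ t, (Q t).PosSemidef)
    {Γ : ℕ → ℝ → Matrix (Fin n) (Fin p) ℝ} (hΓ : IsCtrbMatSeq A B Γ)
    (hTC : TotallyControllable Γ) {x y : ℝ → Fin n → ℝ} (h : IsHamSol A Q B x y) {a b : ℝ}
    (ha : 0 ≤ a) (hab : a < b) (hb : b ≤ 1) (hxa : x a = 0) (hxb : x b = 0) :
    ∀ t ∈ Set.Icc a b, y t = 0 := by
  have hzero := deriv_eq_zero_of_antitone hab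
    (fun t _ => (h.hasDerivAt_dot t).hasDerivWithinAt)
    (fun t _ => IsHamSol.deriv_nonpos hQ x y t) (by simp [hxa, hxb])
  have hBy : ∀ t ∈ Set.Icc a b, (B t)ᵀ *ᵥ y t = 0 := by
    intro t ht
    have h1 : 0 ≤ ((B t)ᵀ *ᵥ y t) ⬝ᵥ ((B t)ᵀ *ᵥ y t) :=
      Finset.sum_nonneg fun i _ => mul_self_nonneg _
    have h2 : 0 ≤ x t ⬝ᵥ (Q t *ᵥ x t) := by simpa using (hQ t).dotProduct_mulVec_nonneg (x t)
    exact dotProduct_self_eq_zero.1 (by linarith [hzero t ht])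
  have hx0 : ∀ t ∈ Set.Icc a b, x t = 0 := by
    refine linear_ode_eq_zero hA.continuousOn (fun t ht => ?_) ⟨le_rfl, hab.le⟩ hxa
    have h1 := (h t).1.hasDerivWithinAt (s := Set.Icc a b)
    rwa [← mulVec_mulVec, hBy t ht, mulVec_zero, sub_zero] at h1
  have hy' : ∀ t ∈ Set.Icc a b, HasDerivWithinAt y (-(A t)ᵀ *ᵥ y t) (Set.Icc a b) t := by
    intro t ht
    have h1 := (h t).2.hasDerivWithinAt (s := Set.Icc a b)
    rwa [hx0 t ht, mulVec_zero, neg_zero, zero_sub, ← neg_mulVec] at h1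
  have hΓy : ∀ k ≤ n, ∀ t ∈ Set.Icc a b, (Γ k t)ᵀ *ᵥ y t = 0 := by
    intro k
    induction k with
    | zero => intro _ t ht; rw [hΓ.1]; exact hBy t ht
    | succ k ih =>
      intro hk t ht
      have h1 : HasDerivWithinAt (fun τ => (Γ k τ)ᵀ *ᵥ y τ) _ (Set.Icc a b) t :=
        hasDerivWithinAt_mulVec (M' := (Γ (k + 1) t + A t * Γ k t)ᵀ)
          (fun i j => (hΓ.2 k hk t j i).hasDerivWithinAt) (hy' t ht)
      have h0 : HasDerivWithinAt (fun τ => (Γ k τ)ᵀ *ᵥ y τ) 0 (Set.Icc a b) t :=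
        (hasDerivWithinAt_const t _ (0 : Fin p → ℝ)).congr (ih (Nat.le_of_succ_le hk))
          (ih (Nat.le_of_succ_le hk) t ht)
      have h2 := (uniqueDiffOn_Icc hab t ht).eq_deriv _ h1 h0
      rw [← h2, transpose_add, transpose_mul, add_mulVec, neg_mulVec, mulVec_neg, mulVec_mulVec]
      abel
  obtain ⟨t, ht, hrank⟩ := hTC a b ha hab hb
  have ht' : t ∈ Set.Icc a b := ⟨ht.1.le, ht.2.le⟩
  have hyt : y t = 0 := by
    refine eq_zero_of_vecMul_of_rank _ hrank _ (funext fun kj => ?_)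
    exact congrFun (hΓy kj.1 kj.1.2.le t ht') kj.2
  exact linear_ode_eq_zero (C := fun t => -(A t)ᵀ)
    (hA.matrix_transpose.neg.continuousOn) hy' ht' hyt

/-! ### The transition matrix and the boundary matrices -/

theorem isHamSol_of_stm {Φ : ℝ → ℝ → Matrix (Fin n ⊕ Fin n) (Fin n ⊕ Fin n) ℝ}
    (hΦ : IsSTM (fun t => fromBlocks (A t) (-(B t * (B t)ᵀ)) (-(Q t)) (-(A t)ᵀ)) Φ)
    (s : ℝ) (v w : Fin n → ℝ) :
    IsHamSol A Q B (fun t => (Φ t s).toBlocks₁₁ *ᵥ v + (Φ t s).toBlocks₁₂ *ᵥ w)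
      (fun t => (Φ t s).toBlocks₂₁ *ᵥ v + (Φ t s).toBlocks₂₂ *ᵥ w) := by
  intro t
  have h := hasDerivWithinAt_mulVec (S := Set.univ) (t := t) (M := fun τ => Φ τ s)
    (fun i j => (hΦ.2 s t i j).hasDerivWithinAt)
    (hasDerivWithinAt_const t _ (Sum.elim v w))
  have e : ∀ τ, Φ τ s *ᵥ Sum.elim v w =
      Sum.elim ((Φ τ s).toBlocks₁₁ *ᵥ v + (Φ τ s).toBlocks₁₂ *ᵥ w)
        ((Φ τ s).toBlocks₂₁ *ᵥ v + (Φ τ s).toBlocks₂₂ *ᵥ w) := by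
    intro τ
    conv_lhs => rw [← fromBlocks_toBlocks (Φ τ s)]
    rw [fromBlocks_mulVec]
    rfl
  rw [mulVec_zero, add_zero, ← mulVec_mulVec, e t, fromBlocks_mulVec, hasDerivWithinAt_univ,
    hasDerivAt_pi] at h
  simp only [e] at h
  constructor
  · rw [hasDerivAt_pi]
    intro i
    refine (h (Sum.inl i)).congr_deriv ?_
    simp [neg_mulVec, sub_eq_add_neg]
  · rw [hasDerivAt_pi]
    intro i
    refine (h (Sum.inr i)).congr_deriv ?_
    simp [neg_mulVec, sub_eq_add_neg]

section Initial

variable {Φ : ℝ → ℝ → Matrix (Fin n ⊕ Fin n) (Fin n ⊕ Fin n) ℝ} {s : ℝ}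

theorem toBlocks₁₁_self (h : Φ s s = 1) : (Φ s s).toBlocks₁₁ = 1 := by
  rw [h, ← fromBlocks_one, toBlocks_fromBlocks₁₁]

theorem toBlocks₁₂_self (h : Φ s s = 1) : (Φ s s).toBlocks₁₂ = 0 := by
  rw [h, ← fromBlocks_one, toBlocks_fromBlocks₁₂]

theorem toBlocks₂₁_self (h : Φ s s = 1) : (Φ s s).toBlocks₂₁ = 0 := by
  rw [h, ← fromBlocks_one, toBlocks_fromBlocks₂₁]

theorem toBlocks₂₂_self (h : Φ s s = 1) : (Φ s s).toBlocks₂₂ = 1 := by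
  rw [h, ← fromBlocks_one, toBlocks_fromBlocks₂₂]

end Initial

/-- There is a trajectory with prescribed value `(v, w)` at time `s`; it is given by `Φ`. -/
theorem exists_isHamSol {Φ : ℝ → ℝ → Matrix (Fin n ⊕ Fin n) (Fin n ⊕ Fin n) ℝ}
    (hΦ : IsSTM (fun t => fromBlocks (A t) (-(B t * (B t)ᵀ)) (-(Q t)) (-(A t)ᵀ)) Φ)
    (s : ℝ) (v w : Fin n → ℝ) :
    ∃ x y : ℝ → Fin n → ℝ, IsHamSol A Q B x y ∧ x s = v ∧ y s = w ∧
      (∀ t, x t = (Φ t s).toBlocks₁₁ *ᵥ v + (Φ t s).toBlocks₁₂ *ᵥ w) ∧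
      ∀ t, y t = (Φ t s).toBlocks₂₁ *ᵥ v + (Φ t s).toBlocks₂₂ *ᵥ w := by
  refine ⟨_, _, isHamSol_of_stm hΦ s v w, ?_, ?_, fun _ => rfl, fun _ => rfl⟩
  · simp [toBlocks₁₁_self (hΦ.1 s), toBlocks₁₂_self (hΦ.1 s)]
  · simp [toBlocks₂₁_self (hΦ.1 s), toBlocks₂₂_self (hΦ.1 s)]

theorem isUnit_of_forall_mulVec (M : Matrix (Fin n) (Fin n) ℝ) (h : ∀ v, M *ᵥ v = 0 → v = 0) :
    IsUnit M := by
  rw [← mulVec_injective_iff_isUnit]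
  intro v w hvw
  rw [← sub_eq_zero]
  exact h _ (by rw [mulVec_sub, sub_eq_zero]; exact hvw)

theorem isUnit_toBlocks₁₂ (hA : Continuous A) (hQ : ∀ t, (Q t).PosSemidef)
    {Γ : ℕ → ℝ → Matrix (Fin n) (Fin p) ℝ} (hΓ : IsCtrbMatSeq A B Γ)
    (hTC : TotallyControllable Γ)
    {Φ : ℝ → ℝ → Matrix (Fin n ⊕ Fin n) (Fin n ⊕ Fin n) ℝ}
    (hΦ : IsSTM (fun t => fromBlocks (A t) (-(B t * (B t)ᵀ)) (-(Q t)) (-(A t)ᵀ)) Φ)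
    {e s : ℝ} (he : e ∈ Set.Icc (0 : ℝ) 1) (hs : s ∈ Set.Icc (0 : ℝ) 1) (hes : e ≠ s) :
    IsUnit (Φ e s).toBlocks₁₂ := by
  refine isUnit_of_forall_mulVec _ fun v hv => ?_
  obtain ⟨x, y, h, hxs, hys, hx, -⟩ := exists_isHamSol hΦ s 0 v
  have hxe : x e = 0 := by rw [hx, hv]; simp
  rw [← hys]
  rcases lt_or_gt_of_ne hes with hlt | hlt
  · exact h.eq_zero_of_two_zeros hA hQ hΓ hTC he.1 hlt hs.2 hxe hxs s ⟨hlt.le, le_rfl⟩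
  · exact h.eq_zero_of_two_zeros hA hQ hΓ hTC hs.1 hlt he.2 hxs hxe s ⟨le_rfl, hlt.le⟩

theorem transpose_eq_of_dot {M : Matrix (Fin n) (Fin n) ℝ}
    (h : ∀ v w, v ⬝ᵥ (M *ᵥ w) = (M *ᵥ v) ⬝ᵥ w) : Mᵀ = M := by
  ext i j
  have := h (Pi.single j 1) (Pi.single i 1)
  simpa using this

/-- The matrix `S = -Φ₁₂(e,s)⁻¹ Φ₁₁(e,s)` sends `v` to the value at `s` of the `y`-part of the
trajectory with `x s = v` and `x e = 0`; it is symmetric because the symplectic form of two such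
trajectories vanishes at `e`. -/
theorem boundary_matrix (hA : Continuous A) (hQ : ∀ t, (Q t).PosSemidef)
    {Γ : ℕ → ℝ → Matrix (Fin n) (Fin p) ℝ} (hΓ : IsCtrbMatSeq A B Γ)
    (hTC : TotallyControllable Γ)
    {Φ : ℝ → ℝ → Matrix (Fin n ⊕ Fin n) (Fin n ⊕ Fin n) ℝ}
    (hΦ : IsSTM (fun t => fromBlocks (A t) (-(B t * (B t)ᵀ)) (-(Q t)) (-(A t)ᵀ)) Φ)
    {e s : ℝ} (he : e ∈ Set.Icc (0 : ℝ) 1) (hs : s ∈ Set.Icc (0 : ℝ) 1) (hes : e ≠ s)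
    {S : Matrix (Fin n) (Fin n) ℝ} (hS : S = -((Φ e s).toBlocks₁₂⁻¹ * (Φ e s).toBlocks₁₁)) :
    (∀ v, ∃ x y, IsHamSol A Q B x y ∧ x s = v ∧ y s = S *ᵥ v ∧ x e = 0) ∧ Sᵀ = S := by
  have hu := isUnit_toBlocks₁₂ hA hQ hΓ hTC hΦ he hs hes
  have h1 : ∀ v, ∃ x y, IsHamSol A Q B x y ∧ x s = v ∧ y s = S *ᵥ v ∧ x e = 0 := by
    intro v
    obtain ⟨x, y, h, hxs, hys, hx, -⟩ := exists_isHamSol hΦ s v (S *ᵥ v)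
    refine ⟨x, y, h, hxs, hys, ?_⟩
    rw [hx, mulVec_mulVec, hS, mul_neg, ← mul_assoc,
      mul_nonsing_inv _ ((isUnit_iff_isUnit_det _).1 hu), one_mul, neg_mulVec, add_neg_cancel]
  refine ⟨h1, transpose_eq_of_dot fun v w => ?_⟩
  obtain ⟨x, y, h, hxs, hys, hxe⟩ := h1 v
  obtain ⟨x₁, y₁, h₁, hxs₁, hys₁, hxe₁⟩ := h1 w
  have := h.symplectic hQ h₁ s e
  rw [hxs, hys, hxs₁, hys₁, hxe, hxe₁, zero_dotProduct, dotProduct_zero, sub_zero] at this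
  exact sub_eq_zero.1 this

/-! ### Trajectories and Riccati solutions -/

/-- For a solution `P` of the Riccati equation and a trajectory `(x, y)`, the defect
`z = y - P x` solves the linear equation `z' = (-Aᵀ + P B Bᵀ) z`. -/
theorem IsHamSol.hasDerivWithinAt_defect {P : ℝ → Matrix (Fin n) (Fin n) ℝ} {I : Set ℝ}
    (hP : IsRiccatiSolOn A Q B P I) {x y : ℝ → Fin n → ℝ} (h : IsHamSol A Q B x y) {t : ℝ}
    (ht : t ∈ I) :
    HasDerivWithinAt (fun τ => y τ - P τ *ᵥ x τ)
      ((-(A t)ᵀ + P t * (B t * (B t)ᵀ)) *ᵥ (y t - P t *ᵥ x t)) I t := by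
  have h1 := (h t).2.hasDerivWithinAt (s := I) |>.sub
    (hasDerivWithinAt_mulVec (hP t ht) ((h t).1.hasDerivWithinAt (s := I)))
  refine h1.congr_deriv ?_
  simp only [mulVec_sub, sub_mulVec, add_mulVec, neg_mulVec, ← mulVec_mulVec]
  abel

theorem IsRiccatiSolOn.continuousOn {P : ℝ → Matrix (Fin n) (Fin n) ℝ} {I : Set ℝ}
    (hP : IsRiccatiSolOn A Q B P I) : ContinuousOn P I :=
  continuousOn_pi.2 fun i => continuousOn_pi.2 fun j => fun t ht =>
    (hP t ht i j).continuousWithinAt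

/-- A trajectory starting on the graph of `P s` stays on the graph of `P`. -/
theorem IsHamSol.eq_riccati_mulVec (hA : Continuous A) (hB : Continuous B)
    {P : ℝ → Matrix (Fin n) (Fin n) ℝ} (hP : IsRiccatiSolOn A Q B P (Set.Icc 0 1))
    {x y : ℝ → Fin n → ℝ} (h : IsHamSol A Q B x y) {s : ℝ} (hs : s ∈ Set.Icc (0 : ℝ) 1)
    (hys : y s = P s *ᵥ x s) {t : ℝ} (ht : t ∈ Set.Icc (0 : ℝ) 1) : y t = P t *ᵥ x t := by
  have hC : ContinuousOn (fun t => -(A t)ᵀ + P t * (B t * (B t)ᵀ)) (Set.Icc 0 1) :=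
    hA.matrix_transpose.neg.continuousOn.add
      (hP.continuousOn.mul (hB.matrix_mul hB.matrix_transpose).continuousOn)
  exact sub_eq_zero.1 (linear_ode_eq_zero hC (fun τ hτ => h.hasDerivWithinAt_defect hP hτ) hs
    (sub_eq_zero.2 hys) t ht)

/-- If `Bᵀ (y - P x) = 0` on an interval, then `x' = (A - B Bᵀ P) x` there, so `x` vanishes
identically as soon as it vanishes at one point. -/
theorem IsHamSol.eq_zero_of_mem_ker (hA : Continuous A) (hB : Continuous B)
    {P : ℝ → Matrix (Fin n) (Fin n) ℝ} {a b : ℝ} (hP : ContinuousOn P (Set.Icc a b))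
    {x y : ℝ → Fin n → ℝ} (h : IsHamSol A Q B x y)
    (hz : ∀ t ∈ Set.Icc a b, (B t)ᵀ *ᵥ (y t - P t *ᵥ x t) = 0) {t₀ : ℝ}
    (ht₀ : t₀ ∈ Set.Icc a b) (h0 : x t₀ = 0) {t : ℝ} (ht : t ∈ Set.Icc a b) : x t = 0 := by
  have hC : ContinuousOn (fun t => A t - B t * (B t)ᵀ * P t) (Set.Icc a b) :=
    hA.continuousOn.sub ((hB.matrix_mul hB.matrix_transpose).continuousOn.mul hP)
  refine linear_ode_eq_zero hC (fun τ hτ => ?_) ht₀ h0 t ht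
  refine ((h τ).1.hasDerivWithinAt).congr_deriv ?_
  have := hz τ hτ
  rw [mulVec_sub, sub_eq_zero] at this
  rw [sub_mulVec, ← mulVec_mulVec, this]
  simp only [mulVec_mulVec, Matrix.mul_assoc]

/-- A Riccati solution through a symmetric matrix is symmetric. -/
theorem IsRiccatiSolOn.transpose_eq (hA : Continuous A) (hB : Continuous B)
    (hQ : ∀ t, (Q t).PosSemidef)
    {Φ : ℝ → ℝ → Matrix (Fin n ⊕ Fin n) (Fin n ⊕ Fin n) ℝ}
    (hΦ : IsSTM (fun t => fromBlocks (A t) (-(B t * (B t)ᵀ)) (-(Q t)) (-(A t)ᵀ)) Φ)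
    {P : ℝ → Matrix (Fin n) (Fin n) ℝ} (hP : IsRiccatiSolOn A Q B P (Set.Icc 0 1))
    {s : ℝ} (hs : s ∈ Set.Icc (0 : ℝ) 1) (hPs : (P s)ᵀ = P s) {t : ℝ}
    (ht : t ∈ Set.Icc (0 : ℝ) 1) : (P t)ᵀ = P t := by
  refine transpose_eq_of_dot fun v w => ?_
  obtain ⟨x, y, h, hxt, hyt, -⟩ := exists_isHamSol hΦ t v (P t *ᵥ v)
  obtain ⟨x₁, y₁, h₁, hxt₁, hyt₁, -⟩ := exists_isHamSol hΦ t w (P t *ᵥ w)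
  have e := h.eq_riccati_mulVec hA hB hP ht (by rw [hyt, hxt]) hs
  have e₁ := h₁.eq_riccati_mulVec hA hB hP ht (by rw [hyt₁, hxt₁]) hs
  have := h.symplectic hQ h₁ t s
  rw [e, e₁, mulVec_dot, hPs, sub_self, hxt, hyt, hxt₁, hyt₁] at this
  exact sub_eq_zero.1 this

/-- With `P` symmetric and `z = y - P x`, one has `(x ⬝ z)' = -|Bᵀ z|²`. -/
theorem IsHamSol.hasDerivWithinAt_dot_defect {P : ℝ → Matrix (Fin n) (Fin n) ℝ} {I : Set ℝ}
    (hP : IsRiccatiSolOn A Q B P I) {x y : ℝ → Fin n → ℝ} (h : IsHamSol A Q B x y) {t : ℝ}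
    (ht : t ∈ I) (hPt : (P t)ᵀ = P t) :
    HasDerivWithinAt (fun τ => x τ ⬝ᵥ (y τ - P τ *ᵥ x τ))
      (-(((B t)ᵀ *ᵥ (y t - P t *ᵥ x t)) ⬝ᵥ ((B t)ᵀ *ᵥ (y t - P t *ᵥ x t)))) I t := by
  have h1 := hasDerivWithinAt_dot ((h t).1.hasDerivWithinAt (s := I))
    (h.hasDerivWithinAt_defect hP ht)
  refine h1.congr_deriv ?_
  obtain ⟨z, hz⟩ : ∃ z, y t - P t *ᵥ x t = z := ⟨_, rfl⟩
  rw [hz]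
  have hy : y t = z + P t *ᵥ x t := by rw [← hz]; abel
  rw [hy]
  simp only [sub_dotProduct, add_mulVec, dotProduct_add, mulVec_add, neg_mulVec, add_dotProduct,
    dotProduct_neg, mulVec_dot, transpose_mul, transpose_transpose, mulVec_mulVec, hPt]
  ring

/-- For a symmetric Riccati solution `P` on `[a, b]` and a trajectory whose `x`-part vanishes
somewhere on `[a, b]` but not identically, `x ⬝ (y - P x)` is strictly smaller at `b` than at `a`:
equality would force `Bᵀ (y - P x) = 0`, hence `x = 0`. -/
theorem IsHamSol.dot_defect_lt (hA : Continuous A) (hB : Continuous B)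
    {P : ℝ → Matrix (Fin n) (Fin n) ℝ} {a b : ℝ} (hab : a < b)
    (hP : IsRiccatiSolOn A Q B P (Set.Icc a b)) (hsym : ∀ t ∈ Set.Icc a b, (P t)ᵀ = P t)
    {x y : ℝ → Fin n → ℝ} (h : IsHamSol A Q B x y) {t₀ t₁ : ℝ} (ht₀ : t₀ ∈ Set.Icc a b)
    (ht₁ : t₁ ∈ Set.Icc a b) (h0 : x t₀ = 0) (h1 : x t₁ ≠ 0) :
    x b ⬝ᵥ (y b - P b *ᵥ x b) < x a ⬝ᵥ (y a - P a *ᵥ x a) := by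
  have hd := fun t ht => h.hasDerivWithinAt_dot_defect hP ht (hsym t ht)
  have hnn : ∀ t, 0 ≤ ((B t)ᵀ *ᵥ (y t - P t *ᵥ x t)) ⬝ᵥ ((B t)ᵀ *ᵥ (y t - P t *ᵥ x t)) :=
    fun t => Finset.sum_nonneg fun i _ => mul_self_nonneg _
  have hle := antitoneOn_of_deriv_within hd (fun t _ => neg_nonpos.2 (hnn t)) ⟨le_rfl, hab.le⟩
    ⟨hab.le, le_rfl⟩ hab.le
  refine lt_of_le_of_ne hle fun heq => h1 ?_
  have hz := deriv_eq_zero_of_antitone hab hd (fun t _ => neg_nonpos.2 (hnn t)) heq.symm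
  exact h.eq_zero_of_mem_ker hA hB hP.continuousOn
    (fun t ht => dotProduct_self_eq_zero.1 (neg_eq_zero.1 (hz t ht))) ht₀ h0 ht₁

/-! ### The two implications -/

/-- Necessity of the two bounds: if a symmetric Riccati solution exists on `[0, 1]`, then at every
time `s` it lies strictly between the boundary matrices of the endpoints `0` and `1`. -/
theorem IsRiccatiSolOn.bounds (hA : Continuous A) (hB : Continuous B)
    (hQ : ∀ t, (Q t).PosSemidef)
    {Γ : ℕ → ℝ → Matrix (Fin n) (Fin p) ℝ} (hΓ : IsCtrbMatSeq A B Γ)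
    (hTC : TotallyControllable Γ)
    {Φ : ℝ → ℝ → Matrix (Fin n ⊕ Fin n) (Fin n ⊕ Fin n) ℝ}
    (hΦ : IsSTM (fun t => fromBlocks (A t) (-(B t * (B t)ᵀ)) (-(Q t)) (-(A t)ᵀ)) Φ)
    {P : ℝ → Matrix (Fin n) (Fin n) ℝ} (hP : IsRiccatiSolOn A Q B P (Set.Icc 0 1))
    (hsym : ∀ t ∈ Set.Icc (0 : ℝ) 1, (P t)ᵀ = P t) {s : ℝ} (hs : s ∈ Set.Icc (0 : ℝ) 1) :
    (0 < s → (P s - -(((Φ 0 s).toBlocks₁₂)⁻¹ * (Φ 0 s).toBlocks₁₁)).PosDef) ∧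
      (s < 1 → (-(((Φ 1 s).toBlocks₁₂)⁻¹ * (Φ 1 s).toBlocks₁₁) - P s).PosDef) := by
  have hmono : ∀ {a b : ℝ}, 0 ≤ a → b ≤ 1 → IsRiccatiSolOn A Q B P (Set.Icc a b) :=
    fun ha hb t ht i j => (hP t ⟨ha.trans ht.1, ht.2.trans hb⟩ i j).mono (Set.Icc_subset_Icc ha hb)
  constructor
  · intro h0
    obtain ⟨S, hS⟩ : ∃ S, S = -(((Φ 0 s).toBlocks₁₂)⁻¹ * (Φ 0 s).toBlocks₁₁) := ⟨_, rfl⟩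
    obtain ⟨htraj, hSsym⟩ := boundary_matrix hA hQ hΓ hTC hΦ ⟨le_rfl, zero_le_one⟩ hs h0.ne hS
    rw [← hS]
    refine PosDef.of_dotProduct_mulVec_pos ?_ fun v hv => ?_
    · change (P s - S)ᴴ = P s - S
      rw [conjTranspose_eq_transpose_of_trivial, transpose_sub, hsym s hs, hSsym]
    obtain ⟨x, y, h, hxs, hys, hxe⟩ := htraj v
    have hlt := h.dot_defect_lt hA hB h0 (hmono le_rfl hs.2)
      (fun t ht => hsym t ⟨ht.1, ht.2.trans hs.2⟩) ⟨le_rfl, h0.le⟩ ⟨h0.le, le_rfl⟩ hxe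
      (by rwa [hxs])
    rw [hxe, zero_dotProduct, hxs, hys, dotProduct_sub] at hlt
    rw [star_trivial, sub_mulVec, dotProduct_sub]
    linarith
  · intro h1
    obtain ⟨S, hS⟩ : ∃ S, S = -(((Φ 1 s).toBlocks₁₂)⁻¹ * (Φ 1 s).toBlocks₁₁) := ⟨_, rfl⟩
    obtain ⟨htraj, hSsym⟩ := boundary_matrix hA hQ hΓ hTC hΦ ⟨zero_le_one, le_rfl⟩ hs h1.ne' hS
    rw [← hS]
    refine PosDef.of_dotProduct_mulVec_pos ?_ fun v hv => ?_
    · change (S - P s)ᴴ = S - P s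
      rw [conjTranspose_eq_transpose_of_trivial, transpose_sub, hsym s hs, hSsym]
    obtain ⟨x, y, h, hxs, hys, hxe⟩ := htraj v
    have hlt := h.dot_defect_lt hA hB h1 (hmono hs.1 le_rfl)
      (fun t ht => hsym t ⟨hs.1.trans ht.1, ht.2⟩) ⟨h1.le, le_rfl⟩ ⟨le_rfl, h1.le⟩ hxe
      (by rwa [hxs])
    rw [hxe, zero_dotProduct, hxs, hys, dotProduct_sub] at hlt
    rw [star_trivial, sub_mulVec, dotProduct_sub]
    linarith

/-- Sufficiency of the bounds, core step: `X(t) = Φ₁₁(t,s) + Φ₁₂(t,s) Π_s` is invertible. If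
`X(t) v = 0`, the trajectory through `(v, Π_s v)` is compared with the one through `(v, S v)` whose
`x`-part vanishes at the endpoint; monotonicity of `x ⬝ y` along both the second one and the
difference contradicts the bound on `Π_s`. -/
theorem isUnit_of_bounds (hA : Continuous A) (hQ : ∀ t, (Q t).PosSemidef)
    {Γ : ℕ → ℝ → Matrix (Fin n) (Fin p) ℝ} (hΓ : IsCtrbMatSeq A B Γ)
    (hTC : TotallyControllable Γ)
    {Φ : ℝ → ℝ → Matrix (Fin n ⊕ Fin n) (Fin n ⊕ Fin n) ℝ}
    (hΦ : IsSTM (fun t => fromBlocks (A t) (-(B t * (B t)ᵀ)) (-(Q t)) (-(A t)ᵀ)) Φ)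
    {s : ℝ} (hs : s ∈ Set.Icc (0 : ℝ) 1) {Ps : Matrix (Fin n) (Fin n) ℝ}
    (h0 : 0 < s → (Ps - -(((Φ 0 s).toBlocks₁₂)⁻¹ * (Φ 0 s).toBlocks₁₁)).PosDef)
    (h1 : s < 1 → (-(((Φ 1 s).toBlocks₁₂)⁻¹ * (Φ 1 s).toBlocks₁₁) - Ps).PosDef)
    {t : ℝ} (ht : t ∈ Set.Icc (0 : ℝ) 1) :
    IsUnit ((Φ t s).toBlocks₁₁ + (Φ t s).toBlocks₁₂ * Ps) := by
  refine isUnit_of_forall_mulVec _ fun v hv => ?_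
  obtain ⟨x, y, h, hxs, hys, hx, -⟩ := exists_isHamSol hΦ s v (Ps *ᵥ v)
  have hxt : x t = 0 := by rw [hx, mulVec_mulVec, ← add_mulVec, hv]
  by_contra hv0
  rcases lt_trichotomy t s with hts | hts | hts
  · have hs0 : 0 < s := ht.1.trans_lt hts
    have hpos := (h0 hs0).dotProduct_mulVec_pos hv0
    obtain ⟨S, hS⟩ : ∃ S, S = -(((Φ 0 s).toBlocks₁₂)⁻¹ * (Φ 0 s).toBlocks₁₁) := ⟨_, rfl⟩
    obtain ⟨htraj, -⟩ := boundary_matrix hA hQ hΓ hTC hΦ ⟨le_rfl, zero_le_one⟩ hs hs0.ne hS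
    rw [← hS, star_trivial, sub_mulVec, dotProduct_sub] at hpos
    obtain ⟨x₁, y₁, h₁, hxs₁, hys₁, hxe₁⟩ := htraj v
    have i1 := (h.sub h₁).antitone_dot hQ hts.le
    have i2 := h₁.antitone_dot hQ ht.1
    have i3 := h₁.symplectic hQ h t s
    simp only [hxs, hxs₁, hys, hys₁, hxt, hxe₁, sub_self, zero_sub, zero_dotProduct,
      dotProduct_zero, neg_dotProduct, dotProduct_sub, sub_zero,
      dotProduct_comm (S *ᵥ v) v] at i1 i2 i3
    linarith
  · rw [hts, hxs] at hxt
    exact hv0 hxt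
  · have hs1 : s < 1 := hts.trans_le ht.2
    have hpos := (h1 hs1).dotProduct_mulVec_pos hv0
    obtain ⟨S, hS⟩ : ∃ S, S = -(((Φ 1 s).toBlocks₁₂)⁻¹ * (Φ 1 s).toBlocks₁₁) := ⟨_, rfl⟩
    obtain ⟨htraj, -⟩ := boundary_matrix hA hQ hΓ hTC hΦ ⟨zero_le_one, le_rfl⟩ hs hs1.ne' hS
    rw [← hS, star_trivial, sub_mulVec, dotProduct_sub] at hpos
    obtain ⟨x₁, y₁, h₁, hxs₁, hys₁, hxe₁⟩ := htraj v
    have i1 := (h.sub h₁).antitone_dot hQ hts.le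
    have i2 := h₁.antitone_dot hQ ht.2
    have i3 := h₁.symplectic hQ h t s
    simp only [hxs, hxs₁, hys, hys₁, hxt, hxe₁, sub_self, zero_sub, zero_dotProduct,
      dotProduct_zero, neg_dotProduct, dotProduct_sub, sub_zero,
      dotProduct_comm (S *ᵥ v) v] at i1 i2 i3
    linarith

/-- Where `X(t) = Φ₁₁(t,s) + Φ₁₂(t,s) Π_s` is invertible, `Y X⁻¹` with
`Y(t) = Φ₂₁(t,s) + Φ₂₂(t,s) Π_s` solves the Riccati equation. -/
theorem isRiccatiSolOn_of_isUnit
    {Φ : ℝ → ℝ → Matrix (Fin n ⊕ Fin n) (Fin n ⊕ Fin n) ℝ}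
    (hΦ : IsSTM (fun t => fromBlocks (A t) (-(B t * (B t)ᵀ)) (-(Q t)) (-(A t)ᵀ)) Φ)
    (s : ℝ) (Ps : Matrix (Fin n) (Fin n) ℝ) {I : Set ℝ}
    (hu : ∀ t ∈ I, IsUnit ((Φ t s).toBlocks₁₁ + (Φ t s).toBlocks₁₂ * Ps)) :
    IsRiccatiSolOn A Q B (fun t => ((Φ t s).toBlocks₂₁ + (Φ t s).toBlocks₂₂ * Ps) *
      ((Φ t s).toBlocks₁₁ + (Φ t s).toBlocks₁₂ * Ps)⁻¹) I := by
  intro t ht i j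
  obtain ⟨X, hX⟩ : ∃ X : ℝ → Matrix (Fin n) (Fin n) ℝ,
    X = fun t => (Φ t s).toBlocks₁₁ + (Φ t s).toBlocks₁₂ * Ps := ⟨_, rfl⟩
  obtain ⟨Y, hY⟩ : ∃ Y : ℝ → Matrix (Fin n) (Fin n) ℝ,
    Y = fun t => (Φ t s).toBlocks₂₁ + (Φ t s).toBlocks₂₂ * Ps := ⟨_, rfl⟩
  have hut : IsUnit (X t) := by rw [hX]; exact hu t ht
  -- The columns of `(X, Y)` are the trajectories through `(eⱼ, Π_s eⱼ)`.
  have hcol : ∀ j, IsHamSol A Q B (fun τ => X τ *ᵥ Pi.single j 1)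
      (fun τ => Y τ *ᵥ Pi.single j 1) := by
    intro j
    have := isHamSol_of_stm hΦ s (Pi.single j 1) (Ps *ᵥ Pi.single j 1)
    simpa only [hX, hY, add_mulVec, mulVec_mulVec] using this
  have hX' : ∀ i j, HasDerivAt (fun τ => X τ i j)
      ((A t * X t - B t * (B t)ᵀ * Y t) i j) t := by
    intro i j
    have := hasDerivAt_pi.1 (hcol j t).1 i
    rw [mulVec_mulVec, mulVec_mulVec, ← sub_mulVec] at this
    simpa only [mulVec_single_one, col_apply] using this
  have hY' : ∀ i j, HasDerivAt (fun τ => Y τ i j)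
      ((-(Q t * X t) - (A t)ᵀ * Y t) i j) t := by
    intro i j
    have := hasDerivAt_pi.1 (hcol j t).2 i
    rw [mulVec_mulVec, mulVec_mulVec, ← neg_mulVec, ← sub_mulVec] at this
    simpa only [mulVec_single_one, col_apply] using this
  have hd := (hasDerivAt_mul_matrix_inv hX' hY' hut i j).hasDerivWithinAt (s := I)
  have hXX : X t * (X t)⁻¹ = 1 := mul_nonsing_inv _ ((isUnit_iff_isUnit_det _).1 hut)
  have hval : (-(Q t * X t) - (A t)ᵀ * Y t) * (X t)⁻¹ -
      Y t * ((X t)⁻¹ * (A t * X t - B t * (B t)ᵀ * Y t) * (X t)⁻¹) =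
      -(A t)ᵀ * (Y t * (X t)⁻¹) - Y t * (X t)⁻¹ * A t +
        Y t * (X t)⁻¹ * (B t * (B t)ᵀ) * (Y t * (X t)⁻¹) - Q t := by
    simp only [Matrix.sub_mul, Matrix.mul_sub, Matrix.neg_mul, Matrix.mul_assoc, hXX,
      Matrix.mul_one]
    abel
  rw [hval] at hd
  rw [hX, hY] at hd
  exact hd

end Hamiltonian

theorem stmt_6 {n p : ℕ} (hn : 1 ≤ n) (hp : 1 ≤ p)
    (A Q : ℝ → Matrix (Fin n) (Fin n) ℝ) (B : ℝ → Matrix (Fin n) (Fin p) ℝ)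
    (hA : Continuous A) (hB : Continuous B) (hQ : Continuous Q)
    (hQpsd : ∀ t, (Q t).PosSemidef)
    (hAsm : ∀ i j, ContDiff ℝ (n - 1 : ℕ) fun t => A t i j)
    (hBsm : ∀ i j, ContDiff ℝ (n : ℕ) fun t => B t i j)
    (Γ : ℕ → ℝ → Matrix (Fin n) (Fin p) ℝ)
    (hΓ : IsCtrbMatSeq A B Γ)
    (hTC : TotallyControllable Γ)
    (Φ : ℝ → ℝ → Matrix (Fin n ⊕ Fin n) (Fin n ⊕ Fin n) ℝ)
    (hΦ : IsSTM (fun t => fromBlocks (A t) (-(B t * (B t)ᵀ)) (-(Q t)) (-(A t)ᵀ)) Φ)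
    (s : ℝ) (hs : s ∈ Set.Icc (0:ℝ) 1)
    (Ps : Matrix (Fin n) (Fin n) ℝ) (hPs : Psᵀ = Ps) :
    ((∃ P : ℝ → Matrix (Fin n) (Fin n) ℝ,
        P s = Ps ∧ IsRiccatiSolOn A Q B P (Set.Icc 0 1)) ↔
      ((0 < s → (Ps - -(((Φ 0 s).toBlocks₁₂)⁻¹ * (Φ 0 s).toBlocks₁₁)).PosDef) ∧
       (s < 1 → (-(((Φ 1 s).toBlocks₁₂)⁻¹ * (Φ 1 s).toBlocks₁₁) - Ps).PosDef))) ∧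
    ∀ P : ℝ → Matrix (Fin n) (Fin n) ℝ,
      P s = Ps → IsRiccatiSolOn A Q B P (Set.Icc 0 1) →
      (∀ t ∈ Set.Icc (0:ℝ) 1,
        P t = ((Φ t s).toBlocks₂₁ + (Φ t s).toBlocks₂₂ * Ps) *
          ((Φ t s).toBlocks₁₁ + (Φ t s).toBlocks₁₂ * Ps)⁻¹) ∧
      (∀ t ∈ Set.Ioo (0:ℝ) 1,
        (P t - -(((Φ 0 t).toBlocks₁₂)⁻¹ * (Φ 0 t).toBlocks₁₁)).PosDef ∧
        (-(((Φ 1 t).toBlocks₁₂)⁻¹ * (Φ 1 t).toBlocks₁₁) - P t).PosDef) := by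
  have hbounds : ∀ P : ℝ → Matrix (Fin n) (Fin n) ℝ, P s = Ps →
      IsRiccatiSolOn A Q B P (Set.Icc 0 1) → ∀ t ∈ Set.Icc (0 : ℝ) 1,
      (0 < t → (P t - -(((Φ 0 t).toBlocks₁₂)⁻¹ * (Φ 0 t).toBlocks₁₁)).PosDef) ∧
        (t < 1 → (-(((Φ 1 t).toBlocks₁₂)⁻¹ * (Φ 1 t).toBlocks₁₁) - P t).PosDef) :=
    fun P hP0 hP t ht => hP.bounds hA hB hQpsd hΓ hTC hΦ
      (fun τ hτ => hP.transpose_eq hA hB hQpsd hΦ hs (by rw [hP0, hPs]) hτ) ht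
  refine ⟨⟨?_, ?_⟩, fun P hP0 hP => ⟨fun t ht => ?_, fun t ht => ?_⟩⟩
  · rintro ⟨P, hP0, hP⟩
    have := hbounds P hP0 hP s hs
    rwa [hP0] at this
  · rintro ⟨h0, h1⟩
    refine ⟨_, ?_, isRiccatiSolOn_of_isUnit hΦ s Ps
      fun t ht => isUnit_of_bounds hA hQpsd hΓ hTC hΦ hs h0 h1 ht⟩
    simp [toBlocks₁₁_self (hΦ.1 s), toBlocks₁₂_self (hΦ.1 s), toBlocks₂₁_self (hΦ.1 s),
      toBlocks₂₂_self (hΦ.1 s)]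
  · have hb := hbounds P hP0 hP s hs
    rw [hP0] at hb
    have hu := isUnit_of_bounds hA hQpsd hΓ hTC hΦ hs hb.1 hb.2 ht
    have hYX : (Φ t s).toBlocks₂₁ + (Φ t s).toBlocks₂₂ * Ps =
        P t * ((Φ t s).toBlocks₁₁ + (Φ t s).toBlocks₁₂ * Ps) := by
      refine Matrix.ext_of_mulVec_single fun j => ?_
      obtain ⟨x, y, h, hxs, hys, hx, hy⟩ :=
        exists_isHamSol hΦ s (Pi.single j 1) (Ps *ᵥ Pi.single j 1)
      have := h.eq_riccati_mulVec hA hB hP hs (by rw [hxs, hys, hP0]) ht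
      rw [hx, hy] at this
      simpa only [mulVec_mulVec, ← add_mulVec] using this
    rw [hYX, Matrix.mul_assoc, mul_nonsing_inv _ ((isUnit_iff_isUnit_det _).1 hu), Matrix.mul_one]
  · have hb := hbounds P hP0 hP t ⟨ht.1.le, ht.2.le⟩
    exact ⟨hb.1 ht.1, hb.2 ht.2⟩
end
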